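/- Let 𝔻₀ be a multiplicative set in ℝ[x₁,…,x_d] (not necessarily finitely generated) and let f₁,…,f_k ∈ ℝ[x₁,…,x_d]. Suppose that for every finitely generated multiplicative set 𝔻 ⊆ 𝔻₀ there exist m ∈ ℕ and elements h₁,…,h_m of A_𝔻 := 𝔻⁻¹ℝ[x₁,…,x_d] such that: (i) with K_𝔻 := {t ∈ ℝ^d : q(t) ≠ 0 for all q ∈ 𝔻, and f_i(t) ≥ 0 for i = 1,…,k}, there is a constant C with |h_j(t)| ≤ C for all t ∈ K_𝔻 and j = 1,…,m; and (ii) for every λ ∈ ℝ^m of the form λ = (h₁(t),…,h_m(t)) with t ∈ K_𝔻, there exist a finitely generated multiplicative set ℰ_λ in the one-variable polynomial ring ℝ[y], a finite-dimensional commutative unital ℝ-algebra C_λ, and a surjective unital ℝ-algebra homomorphism (ℰ_λ⁻¹ℝ[y]) ⊗_ℝ C_λ → A_𝔻/I_λ, where I_λ is the ideal of A_𝔻 generated by h₁−λ₁·1,…,h_m−λ_m·1. Let T₀ be the preordering of A₀ := 𝔻₀⁻¹ℝ[x₁,…,x_d] generated by the images of f₁,…,f_k. Then for every linear functional L₀ on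 A₀ with L₀(f) ≥ 0 for all f ∈ T₀ there exists a positive Borel measure μ on ℝ^d such that for all p ∈ ℝ[x₁,…,x_d] and q ∈ 𝔻₀ the function x ↦ p(x)/q(x) is μ-integrable and L₀(p/q) = ∫_{ℝ^d} p(x)/q(x) dμ(x). -/

import Mathlib

/-- The preordering of a commutative ring generated by a set `S`:
the smallest subset containing all squares and `S`, closed under addition
and multiplication. -/
inductive IsInPreordering {A : Type*} [CommRing A] (S : Set A) : A → Prop
  | sq (a : A) : IsInPreordering S (a ^ 2)
  | gen {a : A} : a ∈ S → IsInPreordering S a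
  | add {a b : A} : IsInPreordering S a → IsInPreordering S b → IsInPreordering S (a + b)
  | mul {a b : A} : IsInPreordering S a → IsInPreordering S b → IsInPreordering S (a * b)

/-- Evaluation of an element of the localization `𝔻⁻¹ℝ[x₁,…,x_d]` at a point `t`
at which no element of `𝔻` vanishes. -/
noncomputable def evalLoc {d : ℕ} (𝔻 : Submonoid (MvPolynomial (Fin d) ℝ)) (t : Fin d → ℝ)
    (ht : ∀ q ∈ 𝔻, MvPolynomial.eval t q ≠ 0) : Localization 𝔻 →+* ℝ :=
  IsLocalization.lift (M := 𝔻) (S := Localization 𝔻)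
    (g := (MvPolynomial.eval t : MvPolynomial (Fin d) ℝ →+* ℝ))
    (fun y => isUnit_iff_ne_zero.2 (ht y y.2))

/-- A finite-dimensional commutative unital real algebra. -/
structure FinCommAlg where
  carrier : Type
  [isRing : CommRing carrier]
  [isAlgebra : Algebra ℝ carrier]
  findim : FiniteDimensional ℝ carrier

attribute [instance] FinCommAlg.isRing FinCommAlg.isAlgebra

namespace RMP
open Polynomial

/-- adjoin an element to a preordering -/
def adj {A : Type*} [CommRing A] (T : Subsemiring A) (hsq : ∀ a, a * a ∈ T) (x : A) : Subsemiring A where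
  carrier := {a | ∃ p ∈ T, ∃ q ∈ T, a = p + q * x}
  mul_mem' := by
    rintro _ _ ⟨p, hp, q, hq, rfl⟩ ⟨p', hp', q', hq', rfl⟩
    refine ⟨p * p' + q * q' * (x * x), ?_, p * q' + q * p', ?_, by ring⟩
    · exact T.add_mem (T.mul_mem hp hp') (T.mul_mem (T.mul_mem hq hq') (hsq x))
    · exact T.add_mem (T.mul_mem hp hq') (T.mul_mem hq hp')
  one_mem' := ⟨1, T.one_mem, 0, T.zero_mem, by ring⟩
  add_mem' := by
    rintro _ _ ⟨p, hp, q, hq, rfl⟩ ⟨p', hp', q', hq', rfl⟩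
    exact ⟨p + p', T.add_mem hp hp', q + q', T.add_mem hq hq', by ring⟩
  zero_mem' := ⟨0, T.zero_mem, 0, T.zero_mem, by ring⟩

lemma le_adj {A : Type*} [CommRing A] (T : Subsemiring A) (hsq : ∀ a, a * a ∈ T) (x : A) :
    T ≤ adj T hsq x := fun p hp => ⟨p, hp, 0, T.zero_mem, by ring⟩

lemma mem_adj {A : Type*} [CommRing A] (T : Subsemiring A) (hsq : ∀ a, a * a ∈ T) (x : A) :
    x ∈ adj T hsq x := ⟨0, T.zero_mem, 1, T.one_mem, by ring⟩

theorem exists_max {A : Type*} [CommRing A] (T : Subsemiring A) (hsq : ∀ a, a * a ∈ T)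
    (h1 : (-1 : A) ∉ T) :
    ∃ P : Subsemiring A, T ≤ P ∧ (-1 : A) ∉ P ∧ (∀ a, a ∈ P ∨ -a ∈ P) ∧
      (∀ a, a ∉ P → ∃ p ∈ P, ∃ q ∈ P, -1 = p + q * a) := by
  obtain ⟨P, hTP, hP⟩ := zorn_le_nonempty₀ {P : Subsemiring A | T ≤ P ∧ (-1 : A) ∉ P} (by
    intro c hc hchain y hy
    refine ⟨sSup c, ⟨(hc hy).1.trans (le_sSup hy), ?_⟩, fun z hz => le_sSup hz⟩
    rw [Subsemiring.mem_sSup_of_directedOn ⟨y, hy⟩ hchain.directedOn]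
    rintro ⟨s, hs, h⟩
    exact (hc hs).2 h) T ⟨le_rfl, h1⟩
  have hsqP : ∀ a, a * a ∈ P := fun a => hTP (hsq a)
  have key : ∀ a, a ∉ P → ∃ p ∈ P, ∃ q ∈ P, -1 = p + q * a := by
    intro a ha
    by_contra hcon
    apply ha
    have : adj P hsqP a ≤ P := hP.2 ⟨hTP.trans (le_adj P hsqP a), hcon⟩ (le_adj P hsqP a)
    exact this (mem_adj P hsqP a)
  refine ⟨P, hTP, hP.1.2, ?_, key⟩
  intro a
  by_contra! hcon
  obtain ⟨p, hp, q, hq, e⟩ := key a hcon.1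
  obtain ⟨p', hp', q', hq', e'⟩ := key (-a) hcon.2
  apply hP.1.2
  have : (-1 : A) = p + p' + p * p' + q * q' * (a * a) := by
    have e1 : q * a = -1 - p := by rw [e]; ring
    have e2 : q' * a = 1 + p' := by linear_combination e'
    have : q * q' * (a * a) = (q * a) * (q' * a) := by ring
    rw [this, e1, e2]; ring
  rw [this]
  exact P.add_mem (P.add_mem (P.add_mem hp hp') (P.mul_mem hp hp')) (P.mul_mem (P.mul_mem hq hq') (hsqP a))

theorem sign_factor {E : Type*} [Field E] [LinearOrder E] [IsStrictOrderedRing E] (a b : E) :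
    ∀ g : E[X], g ≠ 0 → (g.eval a < 0 ∧ 0 < g.eval b ∨ 0 < g.eval a ∧ g.eval b < 0) →
      ∃ p : E[X], Irreducible p ∧ p ∣ g ∧ p.eval a < 0 ∧ 0 < p.eval b := by
    intro g
    induction g using WfDvdMonoid.induction_on_irreducible with
    | zero => intro h; exact absurd rfl h
    | unit u hu =>
      intro _ hs
      obtain ⟨e, he, rfl⟩ := Polynomial.isUnit_iff.1 hu
      simp at hs
      rcases hs with hs | hs
      · exact absurd hs.1 (not_lt.2 hs.2.le)
      · exact absurd hs.1 (not_lt.2 hs.2.le)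
    | mul u p hu hp ihp =>
      intro hne hs
      by_cases hsp : (p.eval a < 0 ∧ 0 < p.eval b)
      · exact ⟨p, hp, dvd_mul_right _ _, hsp⟩
      by_cases hsp' : (0 < p.eval a ∧ p.eval b < 0)
      · refine ⟨-p, ((Associated.refl p).neg_left.irreducible_iff.2 hp), (neg_dvd.2 (dvd_mul_right _ _)), by simpa using hsp'⟩
      simp only [eval_mul] at hs
      have hu' : (u.eval a < 0 ∧ 0 < u.eval b ∨ 0 < u.eval a ∧ u.eval b < 0) := by
        have pa : p.eval a ≠ 0 := by rintro h0; rw [h0] at hs; simp at hs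
        have pb : p.eval b ≠ 0 := by rintro h0; rw [h0] at hs; simp at hs
        rcases lt_or_gt_of_ne pa with pa | pa <;> rcases lt_or_gt_of_ne pb with pb | pb
        · rcases hs with ⟨h1, h2⟩ | ⟨h1, h2⟩
          · right; exact ⟨pos_of_mul_neg_right h1 pa.le, neg_of_mul_pos_right h2 pb.le⟩
          · left; exact ⟨neg_of_mul_pos_right h1 pa.le, pos_of_mul_neg_right h2 pb.le⟩
        · exact absurd ⟨pa, pb⟩ hsp
        · exact absurd ⟨pa, pb⟩ hsp'
        · rcases hs with ⟨h1, h2⟩ | ⟨h1, h2⟩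
          · left; exact ⟨neg_of_mul_neg_right h1 pa.le, pos_of_mul_pos_right h2 pb.le⟩
          · right; exact ⟨pos_of_mul_pos_right h1 pa.le, neg_of_mul_neg_right h2 pb.le⟩
      obtain ⟨p', h1, h2, h3⟩ := ihp hu hu'
      exact ⟨p', h1, h2.mul_left _, h3⟩

/-- sums of squares with nonnegative coefficients in `AdjoinRoot f`. -/
theorem adjoinRoot_real {E : Type*} [Field E] [LinearOrder E] [IsStrictOrderedRing E] :
    ∀ n : ℕ, ∀ f : E[X], f.natDegree = n → Irreducible f → ∀ a b : E, f.eval a < 0 → 0 < f.eval b →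
    ∀ (ι : Type) (s : Finset ι) (c : ι → E) (h : ι → E[X]), (∀ i ∈ s, 0 ≤ c i) →
      ¬ f ∣ 1 + ∑ i ∈ s, C (c i) * h i ^ 2 := by
  intro n
  induction n using Nat.strong_induction_on with
  | _ n ih =>
  intro f hn hf a b ha hb ι s c h hc hdvd
  have hf0 : f ≠ 0 := hf.ne_zero
  have hpos : 0 < n := by
    rw [← hn]; exact hf.natDegree_pos
  -- reduce mod f
  let r : ι → E[X] := fun i => h i % f
  have hdvd' : f ∣ 1 + ∑ i ∈ s, C (c i) * r i ^ 2 := by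
    have : (1 + ∑ i ∈ s, C (c i) * h i ^ 2) - (1 + ∑ i ∈ s, C (c i) * r i ^ 2)
        = ∑ i ∈ s, C (c i) * (h i ^ 2 - r i ^ 2) := by
      simp only [mul_sub, Finset.sum_sub_distrib]; ring
    have h2 : f ∣ ∑ i ∈ s, C (c i) * (h i ^ 2 - r i ^ 2) := by
      apply Finset.dvd_sum
      intro i _
      apply Dvd.dvd.mul_left
      have : h i ^ 2 - r i ^ 2 = (h i - r i) * (h i + r i) := by ring
      rw [this]
      apply Dvd.dvd.mul_right
      exact ⟨h i / f, by have := EuclideanDomain.div_add_mod (h i) f; simp only [r]; linear_combination -this⟩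
    rw [← this] at h2
    have := dvd_sub hdvd h2
    rwa [sub_sub_cancel] at this
  obtain ⟨g, hg⟩ := hdvd'
  have hdeg : (1 + ∑ i ∈ s, C (c i) * r i ^ 2).natDegree ≤ 2 * (n - 1) := by
    refine (natDegree_add_le _ _).trans (max_le (by simp) ?_)
    apply natDegree_sum_le_of_forall_le
    intro i hi
    refine (natDegree_C_mul_le _ _).trans ?_
    refine natDegree_pow_le.trans ?_
    have : (r i).natDegree < f.natDegree := by
      apply natDegree_mod_lt; omega
    omega
  have hev : ∀ x : E, 0 < f.eval x * g.eval x := by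
    intro x
    rw [← eval_mul, ← hg]
    simp only [eval_add, eval_one, eval_finsetSum, eval_mul, eval_C, eval_pow]
    have : 0 ≤ ∑ i ∈ s, c i * (eval x (r i)) ^ 2 :=
      Finset.sum_nonneg fun i hi => mul_nonneg (hc i hi) (sq_nonneg _)
    linarith
  have hga : g.eval a < 0 := by
    have := hev a; by_contra! hh; nlinarith
  have hgb : 0 < g.eval b := by
    have := hev b; by_contra! hh; nlinarith
  have hg0 : g ≠ 0 := by rintro rfl; simp at hga
  have hgdeg : g.natDegree < n := by
    rw [hg, natDegree_mul hf0 hg0] at hdeg; omega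
  -- irreducible factor with sign change
  obtain ⟨p, hp, hpg, hpa, hpb⟩ := sign_factor a b g hg0 (Or.inl ⟨hga, hgb⟩)
  refine ih p.natDegree (lt_of_le_of_lt (natDegree_le_of_dvd hpg hg0) hgdeg) p rfl hp a b hpa hpb
    ι s c r hc ?_
  rw [hg]; exact hpg.mul_left _

end RMP

set_option linter.style.haveILetI false
set_option linter.unnecessarySimpa false
namespace RMP
open Polynomial

/-- intermediate value property for polynomials -/
def IVP (R : Type*) [Field R] [LinearOrder R] : Prop :=
  ∀ (f : R[X]) (a b : R), a < b → (f.eval a < 0 ∧ 0 < f.eval b ∨ 0 < f.eval a ∧ f.eval b < 0) →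
    ∃ c, a < c ∧ c < b ∧ f.eval c = 0

structure Valid {Ω : Type*} [Field Ω] (P : Subsemiring Ω) : Prop where
  anti : ∀ x ∈ P, -x ∈ P → x = 0
  inv : ∀ x ∈ P, x⁻¹ ∈ P
  tot : ∀ x ∈ P, ∀ y ∈ P, x - y ∈ P ∨ y - x ∈ P

def fieldOf {Ω : Type*} [Field Ω] (P : Subsemiring Ω) (hP : Valid P) : Subfield Ω where
  carrier := {x | x ∈ P ∨ -x ∈ P}
  mul_mem' := by
    rintro x y (hx | hx) (hy | hy)
    · exact Or.inl (P.mul_mem hx hy)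
    · right; have := P.mul_mem hx hy; simpa using this
    · right; have := P.mul_mem hx hy; simpa using this
    · left; have := P.mul_mem hx hy; simpa using this
  one_mem' := Or.inl P.one_mem
  add_mem' := by
    rintro x y (hx | hx) (hy | hy)
    · exact Or.inl (P.add_mem hx hy)
    · have := hP.tot x hx (-y) hy
      rcases this with h | h
      · left; simpa using h
      · right; convert h using 1; ring
    · have := hP.tot y hy (-x) hx
      rcases this with h | h
      · left; convert h using 1; ring
      · right; convert h using 1; ring
    · right; have := P.add_mem hx hy; convert this using 1; ring
  zero_mem' := Or.inl P.zero_mem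
  neg_mem' := by
    rintro x (hx | hx)
    · right; simpa using hx
    · left; exact hx
  inv_mem' := by
    rintro x (hx | hx)
    · exact Or.inl (hP.inv x hx)
    · right; have := hP.inv _ hx; rwa [inv_neg] at this

@[reducible] noncomputable def ordOf {Ω : Type*} [Field Ω] (P : Subsemiring Ω) (hP : Valid P) :
    LinearOrder (fieldOf P hP) where
  le x y := (y : Ω) - x ∈ P
  le_refl x := by show (x : Ω) - x ∈ P; rw [sub_self]; exact P.zero_mem
  le_trans x y z h1 h2 := by
    show (z : Ω) - x ∈ P
    have := P.add_mem h1 h2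
    convert this using 1; ring
  le_antisymm x y h1 h2 := by
    have : (y : Ω) - x = 0 := hP.anti _ h1 (by
      have h2 : (x : Ω) - y ∈ P := h2
      convert h2 using 1; ring)
    exact Subtype.ext (sub_eq_zero.1 this).symm
  le_total x y := by
    have := (y - x).2
    rcases this with h | h
    · left; exact h
    · right; show (x : Ω) - y ∈ P; convert h using 1; push_cast; ring
  toDecidableLE := Classical.decRel _

lemma ordOf_strict {Ω : Type*} [Field Ω] (P : Subsemiring Ω) (hP : Valid P) :
    letI := ordOf P hP
    IsStrictOrderedRing (fieldOf P hP) := by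
  letI := ordOf P hP
  haveI : IsOrderedAddMonoid (fieldOf P hP) := ⟨fun a b h c => by
    show ((b + c : fieldOf P hP) : Ω) - ((a + c : fieldOf P hP) : Ω) ∈ P
    have h : (b : Ω) - a ∈ P := h
    convert h using 1; push_cast; ring, fun a b h c => by
    show ((c + b : fieldOf P hP) : Ω) - ((c + a : fieldOf P hP) : Ω) ∈ P
    have h : (b : Ω) - a ∈ P := h
    convert h using 1; push_cast; ring⟩
  haveI : ZeroLEOneClass (fieldOf P hP) := ⟨by
    show ((1 : fieldOf P hP) : Ω) - ((0 : fieldOf P hP) : Ω) ∈ P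
    simp⟩
  have hle : ∀ x : fieldOf P hP, 0 ≤ x ↔ (x : Ω) ∈ P := by
    intro x
    show (x : Ω) - ((0 : fieldOf P hP) : Ω) ∈ P ↔ _
    simp
  refine IsStrictOrderedRing.of_mul_pos ?_
  intro a b ha hb
  apply lt_of_le_of_ne
  · rw [hle]; exact P.mul_mem ((hle a).1 ha.le) ((hle b).1 hb.le)
  · exact (mul_ne_zero ha.ne' hb.ne').symm

lemma ordOf_nonneg {Ω : Type*} [Field Ω] (P : Subsemiring Ω) (hP : Valid P) :
    letI := ordOf P hP
    ∀ x : fieldOf P hP, 0 ≤ x ↔ (x : Ω) ∈ P := by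
  intro x
  show (x : Ω) - ((0 : fieldOf P hP) : Ω) ∈ P ↔ _
  simp

/-- weighted sums of squares -/
def wsos (E K : Type*) [Field E] [LinearOrder E] [IsStrictOrderedRing E] [Field K] [Algebra E K] :
    Subsemiring K where
  carrier := {x | ∃ (ι : Type) (s : Finset ι) (c : ι → E) (h : ι → K), (∀ i ∈ s, 0 ≤ c i) ∧
    x = ∑ i ∈ s, algebraMap E K (c i) * h i ^ 2}
  mul_mem' := by
    rintro _ _ ⟨ι, s, c, h, hc, rfl⟩ ⟨ι', s', c', h', hc', rfl⟩
    refine ⟨ι × ι', s ×ˢ s', fun p => c p.1 * c' p.2, fun p => h p.1 * h' p.2, ?_, ?_⟩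
    · intro p hp
      rw [Finset.mem_product] at hp
      exact mul_nonneg (hc _ hp.1) (hc' _ hp.2)
    · rw [Finset.sum_mul_sum, Finset.sum_product]
      refine Finset.sum_congr rfl fun i _ => Finset.sum_congr rfl fun j _ => ?_
      rw [map_mul]; ring
  one_mem' := ⟨Unit, {()}, fun _ => 1, fun _ => 1, by simp, by simp⟩
  add_mem' := by
    rintro _ _ ⟨ι, s, c, h, hc, rfl⟩ ⟨ι', s', c', h', hc', rfl⟩
    refine ⟨ι ⊕ ι', s.disjSum s', Sum.elim c c', Sum.elim h h', ?_, ?_⟩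
    · intro p hp
      rcases p with p | p
      · exact hc _ (by simpa using hp)
      · exact hc' _ (by simpa using hp)
    · simp [Finset.sum_disjSum]
  zero_mem' := ⟨Unit, ∅, fun _ => 1, fun _ => 1, by simp, by simp⟩

theorem valid_map {K Ω : Type*} [Field K] [Field Ω] (φ : K →+* Ω) (Q : Subsemiring K)
    (hsq : ∀ x : K, x * x ∈ Q) (hQ2 : (-1 : K) ∉ Q) (hQ3 : ∀ a, a ∈ Q ∨ -a ∈ Q) :
    Valid (Q.map φ) := by
      have hφ : Function.Injective φ := φ.injective
      have anti : ∀ x ∈ Q, -x ∈ Q → x = 0 := by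
        intro x hx hx'
        by_contra h0
        apply hQ2
        have := Q.mul_mem (Q.mul_mem hx hx') (hsq x⁻¹)
        convert this using 1
        field_simp
      have inv : ∀ x ∈ Q, x⁻¹ ∈ Q := by
        intro x hx
        by_cases h0 : x = 0
        · simpa [h0] using Q.zero_mem
        have := Q.mul_mem hx (hsq x⁻¹)
        convert this using 1
        field_simp
      refine ⟨?_, ?_, ?_⟩
      · rintro _ ⟨x, hx, rfl⟩ ⟨y, hy, hxy⟩
        have : y = -x := hφ (by rw [hxy, map_neg])
        rw [anti x hx (this ▸ hy), map_zero]
      · rintro _ ⟨x, hx, rfl⟩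
        exact ⟨x⁻¹, inv x hx, map_inv₀ φ x⟩
      · rintro _ ⟨x, hx, rfl⟩ _ ⟨y, hy, rfl⟩
        rcases hQ3 (x - y) with h | h
        · left; exact ⟨x - y, h, map_sub φ x y⟩
        · right; exact ⟨_, h, by rw [neg_sub, map_sub]⟩

theorem exists_ivp_field {Ω : Type*} [Field Ω] [IsAlgClosed Ω] (P₀ : Subsemiring Ω)
    (hP₀ : Valid P₀) :
    ∃ (P : Subsemiring Ω) (hP : Valid P), P₀ ≤ P ∧ @IVP (fieldOf P hP) _ (ordOf P hP) := by
  obtain ⟨P, hle, hmax⟩ := zorn_le_nonempty₀ {P : Subsemiring Ω | Valid P} (by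
    intro c hc hchain y hy
    have hmem : ∀ x, x ∈ sSup c ↔ ∃ s ∈ c, x ∈ s := fun x =>
      Subsemiring.mem_sSup_of_directedOn ⟨y, hy⟩ hchain.directedOn
    refine ⟨sSup c, ⟨?_, ?_, ?_⟩, fun z hz => le_sSup hz⟩
    · intro x hx hx'
      obtain ⟨s, hs, h⟩ := (hmem _).1 hx
      obtain ⟨s', hs', h'⟩ := (hmem _).1 hx'
      obtain ⟨t, ht, h1, h2⟩ := hchain.directedOn s hs s' hs'
      exact (hc ht).anti x (h1 h) (h2 h')
    · intro x hx
      obtain ⟨s, hs, h⟩ := (hmem _).1 hx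
      exact (hmem _).2 ⟨s, hs, (hc hs).inv x h⟩
    · intro x hx x' hx'
      obtain ⟨s, hs, h⟩ := (hmem _).1 hx
      obtain ⟨s', hs', h'⟩ := (hmem _).1 hx'
      obtain ⟨t, ht, h1, h2⟩ := hchain.directedOn s hs s' hs'
      rcases (hc ht).tot x (h1 h) x' (h2 h') with hh | hh
      · left; exact (hmem _).2 ⟨t, ht, hh⟩
      · right; exact (hmem _).2 ⟨t, ht, hh⟩) P₀ hP₀
  have hP : Valid P := hmax.1
  refine ⟨P, hP, hle, ?_⟩
  letI := ordOf P hP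
  haveI := ordOf_strict P hP
  have hnn := ordOf_nonneg P hP
  -- irreducible sign changers are linear
  have main : ∀ p : (fieldOf P hP)[X], Irreducible p → ∀ a b, p.eval a < 0 → 0 < p.eval b →
      ∃ r, p.eval r = 0 := by
    intro p hp a b ha hb
    haveI : Fact (Irreducible p) := ⟨hp⟩
    let K := AdjoinRoot p
    obtain ⟨Q, hQ1, hQ2, hQ3, -⟩ := exists_max (wsos (fieldOf P hP) K)
      (fun x => ⟨Unit, {()}, fun _ => 1, fun _ => x, by simp, by simp [sq]⟩) (by
        rintro ⟨ι, s, c, h, hc, he⟩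
        choose h' hh' using fun i => AdjoinRoot.mk_surjective (g := p) (h i)
        apply adjoinRoot_real p.natDegree p rfl hp a b ha hb ι s c h' hc
        rw [← AdjoinRoot.mk_eq_zero]
        simp only [map_add, map_one, map_sum, map_mul, map_pow, hh']
        have : ∀ x, AdjoinRoot.mk p (C x) = algebraMap _ K x := fun x => rfl
        simp only [this]
        rw [← he]; ring)
    obtain ⟨α, hα⟩ := IsAlgClosed.exists_eval₂_eq_zero (fieldOf P hP).subtype p
      (by rw [Polynomial.degree_eq_natDegree hp.ne_zero]; have := hp.natDegree_pos; exact_mod_cast this.ne')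
    let φ : K →+* Ω := AdjoinRoot.lift (fieldOf P hP).subtype α hα
    have hφ : Function.Injective φ := φ.injective
    have hsq : ∀ x : K, x * x ∈ Q := fun x =>
      hQ1 ⟨Unit, {()}, fun _ => 1, fun _ => x, by simp, by simp [sq]⟩
    have hV : Valid (Q.map φ) := valid_map φ Q hsq hQ2 hQ3
    have hPQ : P ≤ Q.map φ := by
      intro x hx
      refine ⟨algebraMap (fieldOf P hP) K ⟨x, Or.inl hx⟩, ?_, ?_⟩
      · apply hQ1
        exact ⟨Unit, {()}, fun _ => ⟨x, Or.inl hx⟩, fun _ => 1, fun _ _ => (hnn _).2 hx, by simp⟩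
      · show φ (AdjoinRoot.of p ⟨x, Or.inl hx⟩) = x
        exact AdjoinRoot.lift_of hα
    have hQP : Q.map φ ≤ P := hmax.2 hV hPQ
    have hαE : α ∈ fieldOf P hP := by
      have hr : φ (AdjoinRoot.root p) = α := AdjoinRoot.lift_root hα
      rcases hQ3 (AdjoinRoot.root p) with h | h
      · left; exact hQP ⟨_, h, hr⟩
      · right; exact hQP ⟨_, h, by rw [map_neg]; exact congrArg _ hr⟩
    refine ⟨⟨α, hαE⟩, ?_⟩
    apply (fieldOf P hP).subtype.injective
    rw [map_zero, ← hα]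
    exact Polynomial.hom_eval₂ p (RingHom.id _) (fieldOf P hP).subtype ⟨α, hαE⟩
  intro f a b hab hs
  have hf0 : f ≠ 0 := by rintro rfl; simp at hs
  obtain ⟨p, hp, ⟨g, rfl⟩, hpa, hpb⟩ := sign_factor a b f hf0 hs
  obtain ⟨r, hr⟩ := main p hp a b hpa hpb
  have hdeg := natDegree_eq_of_degree_eq_some (degree_eq_one_of_irreducible_of_root hp hr)
  obtain ⟨u, v, huv⟩ := exists_eq_X_add_C_of_natDegree_le_one hdeg.le
  refine ⟨r, ?_, ?_, by rw [eval_mul, hr, zero_mul]⟩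
  all_goals
    subst huv
    simp only [eval_add, eval_mul, eval_C, eval_X] at hpa hpb hr
    have hu : u * (b - a) > 0 := by linarith
    have hu : 0 < u := pos_of_mul_pos_left hu (sub_nonneg.2 hab.le)
    by_contra! hcon
    nlinarith


theorem exists_ivp_of_preordering.{u} {A : Type u} [CommRing A] (T : Subsemiring A)
    (hsq : ∀ a, a * a ∈ T) (h1 : (-1 : A) ∉ T) :
    ∃ (R : Type u) (_ : Field R) (_ : LinearOrder R) (_ : IsStrictOrderedRing R) (φ : A →+* R),
      IVP R ∧ ∀ a ∈ T, 0 ≤ φ a := by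
  obtain ⟨P, hTP, hP1, hP2, hP3⟩ := exists_max T hsq h1
  have hsqP : ∀ a, a * a ∈ P := fun a => hTP (hsq a)
  let I : Ideal A :=
    { carrier := {x | x ∈ P ∧ -x ∈ P}
      add_mem' := by
        rintro x y ⟨h1, h2⟩ ⟨h3, h4⟩
        refine ⟨P.add_mem h1 h3, ?_⟩
        have := P.add_mem h2 h4; convert this using 1; ring
      zero_mem' := ⟨P.zero_mem, by simpa using P.zero_mem⟩
      smul_mem' := by
        rintro c x ⟨h1, h2⟩
        rcases hP2 c with hc | hc
        · exact ⟨P.mul_mem hc h1, by simpa using P.mul_mem hc h2⟩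
        · exact ⟨by simpa using P.mul_mem hc h2, by simpa using P.mul_mem hc h1⟩ }
  have hI : ∀ x, x ∈ I ↔ x ∈ P ∧ -x ∈ P := fun x => Iff.rfl
  have hprime : I.IsPrime := by
    have key : ∀ a b, -a ∉ P → -b ∉ P → a * b ∉ I := by
      intro a b ha hb hab
      obtain ⟨p, hp, q, hq, e⟩ := hP3 _ ha
      obtain ⟨p', hp', q', hq', e'⟩ := hP3 _ hb
      apply hP1
      have h : (-1 : A) = p + p' + p * p' + q * q' * (-(a * b)) := by
        have e1 : q * a = 1 + p := by linear_combination e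
        have e2 : q' * b = 1 + p' := by linear_combination e'
        have : q * q' * (-(a * b)) = -((q * a) * (q' * b)) := by ring
        rw [this, e1, e2]; ring
      rw [h]
      exact P.add_mem (P.add_mem (P.add_mem hp hp') (P.mul_mem hp hp'))
        (P.mul_mem (P.mul_mem hq hq') hab.2)
    refine ⟨?_, ?_⟩
    · intro h
      exact hP1 ((hI 1).1 (by rw [h]; trivial)).2
    · intro a b hab
      by_contra! hcon
      rw [hI, hI] at hcon
      have hA : ∀ a, ¬ (a ∈ P ∧ -a ∈ P) → -a ∉ P ∨ -(-a) ∉ P := by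
        intro a ha
        rw [neg_neg]
        tauto
      rcases hA a hcon.1 with h1 | h1 <;> rcases hA b hcon.2 with h2 | h2
      · exact key _ _ h1 h2 hab
      · exact key _ _ h1 h2 (by rw [mul_neg]; exact I.neg_mem hab)
      · exact key _ _ h1 h2 (by rw [neg_mul]; exact I.neg_mem hab)
      · exact key _ _ h1 h2 (by rw [neg_mul_neg]; exact hab)
  obtain ⟨Ω, _, _, ψ, hψ⟩ : ∃ (Ω : Type u) (_ : Field Ω) (_ : IsAlgClosed Ω) (ψ : A →+* Ω),
      ∀ a, ψ a = 0 ↔ a ∈ I := by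
    refine ⟨AlgebraicClosure (FractionRing (A ⧸ I)), inferInstance, inferInstance,
      (algebraMap (FractionRing (A ⧸ I)) _).comp
        ((algebraMap (A ⧸ I) (FractionRing (A ⧸ I))).comp (Ideal.Quotient.mk I)), ?_⟩
    intro a
    simp only [RingHom.comp_apply, map_eq_zero]
    rw [IsFractionRing.to_map_eq_zero_iff (K := FractionRing (A ⧸ I)), Ideal.Quotient.eq_zero_iff_mem]
  let P₀ : Subsemiring Ω :=
    { carrier := {x | ∃ p ∈ P, ∃ s, s ∉ I ∧ x = ψ p / (ψ s) ^ 2}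
      mul_mem' := by
        rintro _ _ ⟨p, hp, s, hs, rfl⟩ ⟨p', hp', s', hs', rfl⟩
        refine ⟨p * p', P.mul_mem hp hp', s * s', fun h => ?_, ?_⟩
        · rcases hprime.mem_or_mem h with h | h <;> contradiction
        · rw [map_mul, map_mul]; ring
      one_mem' := ⟨1, P.one_mem, 1, fun h => hP1 ((hI 1).1 h).2, by simp⟩
      add_mem' := by
        rintro _ _ ⟨p, hp, s, hs, rfl⟩ ⟨p', hp', s', hs', rfl⟩
        refine ⟨p * (s' * s') + p' * (s * s), P.add_mem (P.mul_mem hp (hsqP _)) (P.mul_mem hp' (hsqP _)),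
          s * s', fun h => ?_, ?_⟩
        · rcases hprime.mem_or_mem h with h | h <;> contradiction
        · have h1 : ψ s ≠ 0 := fun h => hs ((hψ _).1 h)
          have h2 : ψ s' ≠ 0 := fun h => hs' ((hψ _).1 h)
          simp only [map_mul, map_add]
          field_simp
      zero_mem' := ⟨0, P.zero_mem, 1, fun h => hP1 ((hI 1).1 h).2, by simp⟩ }
  have hval : Valid P₀ := by
    refine ⟨?_, ?_, ?_⟩
    · rintro _ ⟨p, hp, s, hs, rfl⟩ ⟨p', hp', s', hs', e⟩
      have h1 : ψ s ≠ 0 := fun h => hs ((hψ _).1 h)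
      have h2 : ψ s' ≠ 0 := fun h => hs' ((hψ _).1 h)
      have e2 : ψ (p * (s' * s') + p' * (s * s)) = 0 := by
        simp only [map_mul, map_add]
        field_simp at e
        linear_combination -e
      rw [hψ, hI] at e2
      have e3 : p * (s' * s') ∈ I := by
        refine ⟨P.mul_mem hp (hsqP _), ?_⟩
        have := P.add_mem e2.2 (P.mul_mem hp' (hsqP s))
        convert this using 1; ring
      rcases hprime.mem_or_mem e3 with h | h
      · rw [(hψ p).2 h, zero_div]
      · rcases hprime.mem_or_mem h with h | h <;> contradiction
    · rintro _ ⟨p, hp, s, hs, rfl⟩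
      by_cases hpI : p ∈ I
      · rw [(hψ p).2 hpI]
        exact ⟨0, P.zero_mem, 1, fun h => hP1 ((hI 1).1 h).2, by simp⟩
      · refine ⟨p * (s * s), P.mul_mem hp (hsqP s), p, hpI, ?_⟩
        have h1 : ψ s ≠ 0 := fun h => hs ((hψ _).1 h)
        have h2 : ψ p ≠ 0 := fun h => hpI ((hψ _).1 h)
        simp only [map_mul]
        field_simp
    · rintro _ ⟨p, hp, s, hs, rfl⟩ _ ⟨p', hp', s', hs', rfl⟩
      have h1 : ψ s ≠ 0 := fun h => hs ((hψ _).1 h)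
      have h2 : ψ s' ≠ 0 := fun h => hs' ((hψ _).1 h)
      have hss : s * s' ∉ I := fun h => by
        rcases hprime.mem_or_mem h with h | h <;> contradiction
      rcases hP2 (p * (s' * s') - p' * (s * s)) with h | h
      · left
        refine ⟨_, h, s * s', hss, ?_⟩
        simp only [map_mul, map_sub]
        field_simp
      · right
        refine ⟨_, h, s * s', hss, ?_⟩
        simp only [map_mul, map_sub, map_neg]
        field_simp
        ring
  obtain ⟨Q, hQ, hle, hivp⟩ := exists_ivp_field P₀ hval
  have hin : ∀ a ∈ P, ψ a ∈ Q := fun a ha => hle ⟨a, ha, 1, fun h => hP1 ((hI 1).1 h).2, by simp⟩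
  refine ⟨fieldOf Q hQ, inferInstance, ordOf Q hQ, ordOf_strict Q hQ,
    ψ.codRestrict (fieldOf Q hQ) (fun a => ?_), hivp, ?_⟩
  · rcases hP2 a with h | h
    · exact Or.inl (hin a h)
    · right; rw [← map_neg]; exact hin _ h
  · intro a ha
    exact (ordOf_nonneg Q hQ _).2 (hin a (hTP ha))

end RMP

namespace RMP
open Polynomial
set_option linter.unusedSectionVars false

section ivp
variable {R : Type*} [Field R] [LinearOrder R] [IsStrictOrderedRing R]

lemma ivp_noroot (hR : IVP R) (f : R[X]) (a b : R) (hab : a ≤ b)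
    (h : ∀ x, a ≤ x → x ≤ b → f.eval x ≠ 0) : SignType.sign (f.eval a) = SignType.sign (f.eval b) := by
  rcases hab.eq_or_lt with rfl | hab
  · rfl
  have ha := h a le_rfl hab.le
  have hb := h b hab.le le_rfl
  rcases lt_or_gt_of_ne ha with ha | ha <;> rcases lt_or_gt_of_ne hb with hb | hb
  · rw [sign_neg ha, sign_neg hb]
  · obtain ⟨c, h1, h2, h3⟩ := hR f a b hab (Or.inl ⟨ha, hb⟩)
    exact absurd h3 (h c h1.le h2.le)
  · obtain ⟨c, h1, h2, h3⟩ := hR f a b hab (Or.inr ⟨ha, hb⟩)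
    exact absurd h3 (h c h1.le h2.le)
  · rw [sign_pos ha, sign_pos hb]

lemma rolle_aux (hR : IVP R) (f : R[X]) (hf : f ≠ 0) (a b : R) (hab : a < b) (ha : f.eval a = 0)
    (hb : f.eval b = 0) (hno : ∀ x, a < x → x < b → f.eval x ≠ 0) :
    ∃ c, a < c ∧ c < b ∧ f.derivative.eval c = 0 := by
  obtain ⟨q, hq, hqa⟩ := exists_eq_pow_rootMultiplicity_mul_and_not_dvd f hf a
  set m := f.rootMultiplicity a with hm
  have hm0 : 0 < m := (rootMultiplicity_pos hf).2 ha
  have hq0 : q ≠ 0 := by rintro rfl; simp at hqa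
  obtain ⟨g, hg, hgb⟩ := exists_eq_pow_rootMultiplicity_mul_and_not_dvd q hq0 b
  set n := q.rootMultiplicity b with hn
  have hqb : q.eval b = 0 := by
    rw [hq] at hb
    simp only [eval_mul, eval_pow, eval_sub, eval_X, eval_C] at hb
    exact (mul_eq_zero.1 hb).resolve_left (pow_ne_zero _ (sub_ne_zero.2 hab.ne'))
  have hn0 : 0 < n := (rootMultiplicity_pos hq0).2 hqb
  have hga : g.eval a ≠ 0 := by
    intro h
    apply hqa
    rw [dvd_iff_isRoot, hg, IsRoot, eval_mul, h, mul_zero]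
  have hgb' : g.eval b ≠ 0 := fun h => hgb (dvd_iff_isRoot.2 h)
  have hsgn : SignType.sign (g.eval a) = SignType.sign (g.eval b) := by
    apply ivp_noroot hR g a b hab.le
    intro x hx hx' h0
    rcases hx.eq_or_lt with rfl | hx
    · exact hga h0
    rcases hx'.eq_or_lt with rfl | hx'
    · exact hgb' h0
    apply hno x hx hx'
    rw [hq, hg]; simp [h0]
  obtain ⟨m', hm'⟩ : ∃ m', m = m' + 1 := ⟨m - 1, by omega⟩
  rw [hm'] at hq
  obtain ⟨n', hn'⟩ : ∃ n', n = n' + 1 := ⟨n - 1, by omega⟩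
  rw [hn'] at hg
  let g1 : R[X] := C ((m' : R) + 1) * (X - C b) * g + C ((n' : R) + 1) * (X - C a) * g +
    (X - C a) * (X - C b) * derivative g
  have hder : derivative f = (X - C a) ^ m' * (X - C b) ^ n' * g1 := by
    rw [hq, hg]
    simp only [derivative_mul, derivative_X_sub_C_pow, g1]
    push_cast
    simp only [Nat.add_sub_cancel, map_add, map_natCast, map_one]
    ring
  have e1 : g1.eval a = ((m' : R) + 1) * (a - b) * g.eval a := by simp [g1]
  have e2 : g1.eval b = ((n' : R) + 1) * (b - a) * g.eval b := by simp [g1]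
  have hmp : (0 : R) < (m' : R) + 1 := by positivity
  have hnp : (0 : R) < (n' : R) + 1 := by positivity
  have hs : (g1.eval a < 0 ∧ 0 < g1.eval b ∨ 0 < g1.eval a ∧ g1.eval b < 0) := by
    rw [e1, e2]
    have h1 : ((m' : R) + 1) * (a - b) < 0 := mul_neg_of_pos_of_neg hmp (sub_neg.2 hab)
    have h2 : 0 < ((n' : R) + 1) * (b - a) := mul_pos hnp (sub_pos.2 hab)
    rcases lt_or_gt_of_ne hga with h | h
    · rw [sign_neg h] at hsgn
      have h' := sign_eq_neg_one_iff.1 hsgn.symm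
      right; exact ⟨mul_pos_of_neg_of_neg h1 h, mul_neg_of_pos_of_neg h2 h'⟩
    · rw [sign_pos h] at hsgn
      have h' := sign_eq_one_iff.1 hsgn.symm
      left; exact ⟨mul_neg_of_neg_of_pos h1 h, mul_pos h2 h'⟩
  obtain ⟨c, h1, h2, h3⟩ := hR g1 a b hab hs
  exact ⟨c, h1, h2, by rw [hder, eval_mul, h3, mul_zero]⟩

lemma rolle (hR : IVP R) (f : R[X]) (a b : R) (hab : a < b) (ha : f.eval a = 0)
    (hb : f.eval b = 0) : ∃ c, a < c ∧ c < b ∧ f.derivative.eval c = 0 := by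
  by_cases hf : f = 0
  · obtain ⟨c, h1, h2⟩ := exists_between hab
    exact ⟨c, h1, h2, by simp [hf]⟩
  -- next root
  let s := f.roots.toFinset.filter (fun x => a < x)
  have hbs : b ∈ s := by simp [s, hf, hb, hab]
  have hne : s.Nonempty := ⟨b, hbs⟩
  have hmem := s.min'_mem hne
  have hle : s.min' hne ≤ b := s.min'_le b hbs
  set b' := s.min' hne with hb'
  have hb'1 : f.eval b' = 0 ∧ a < b' := by simpa [s, hf] using hmem
  obtain ⟨c, h1, h2, h3⟩ := rolle_aux hR f hf a b' hb'1.2 ha hb'1.1 (by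
    intro x hx hx' h0
    have : x ∈ s := by simp [s, hf, h0, hx]
    exact absurd (s.min'_le x this) (not_le.2 hx'))
  exact ⟨c, h1, h2.trans_le hle, h3⟩

lemma mvt (hR : IVP R) (f : R[X]) (a b : R) (hab : a < b) :
    ∃ c, a < c ∧ c < b ∧ f.eval b - f.eval a = f.derivative.eval c * (b - a) := by
  have hne : b - a ≠ 0 := sub_ne_zero.2 hab.ne'
  let k := (f.eval b - f.eval a) / (b - a)
  have hk : k * (b - a) = f.eval b - f.eval a := div_mul_cancel₀ _ hne
  obtain ⟨c, h1, h2, h3⟩ := rolle hR (f - C (f.eval a) - C k * (X - C a)) a b hab (by simp)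
    (by simp [hk])
  refine ⟨c, h1, h2, ?_⟩
  simp at h3
  rw [← hk, sub_eq_zero.1 h3]

/-- Thom lemma -/
lemma thom (hR : IVP R) : ∀ n : ℕ, ∀ p : R[X], p.natDegree ≤ n → ∀ u v : R, u ≤ v →
    (∀ k, SignType.sign ((derivative^[k] p).eval u) = SignType.sign ((derivative^[k] p).eval v)) →
    ∀ x, u ≤ x → x ≤ v → SignType.sign (p.eval x) = SignType.sign (p.eval u) := by
  intro n
  induction n with
  | zero =>
    intro p hp u v _ _ x _ _
    rw [Polynomial.eq_C_of_natDegree_le_zero hp]; simp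
  | succ n ih =>
    intro p hp u v huv hs x hx hx'
    have hd := ih p.derivative (by have := natDegree_derivative_le p; omega) u v huv
      (fun k => by simpa using hs (k + 1))
    have h0 := hs 0
    simp only [Function.iterate_zero, id_eq] at h0
    have key : ∀ y z, u ≤ y → y ≤ z → z ≤ v →
        (SignType.sign (p.derivative.eval u) = 1 → p.eval y ≤ p.eval z) ∧
        (SignType.sign (p.derivative.eval u) = 0 → p.eval y = p.eval z) ∧
        (SignType.sign (p.derivative.eval u) = -1 → p.eval z ≤ p.eval y) ∧ 
        (y < z → SignType.sign (p.derivative.eval u) ≠ 0 → p.eval y ≠ p.eval z) := by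
      intro y z hy hyz hz
      rcases hyz.eq_or_lt with rfl | hyz
      · exact ⟨fun _ => le_rfl, fun _ => rfl, fun _ => le_rfl, fun h => absurd h (lt_irrefl _)⟩
      obtain ⟨c, h1, h2, h3⟩ := mvt hR p y z hyz
      have hc := hd c (by order) (by order)
      have hzy : 0 < z - y := sub_pos.2 hyz
      rw [← hc]
      refine ⟨fun h => ?_, fun h => ?_, fun h => ?_, fun _ h h' => ?_⟩
      · have := mul_pos (sign_eq_one_iff.1 h) hzy
        linarith
      · rw [sign_eq_zero_iff.1 h] at h3; linarith
      · have := mul_neg_of_neg_of_pos (sign_eq_neg_one_iff.1 h) hzy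
        linarith
      · rw [h', sub_self] at h3
        have := (mul_eq_zero.1 h3.symm).resolve_right hzy.ne'
        rw [this] at h; simp at h
    obtain ⟨k1, k2, k3, k4⟩ := key u x le_rfl hx hx'
    obtain ⟨l1, l2, l3, l4⟩ := key x v hx hx' le_rfl
    rcases hx.eq_or_lt with rfl | hxlt
    · rfl
    rcases hx'.eq_or_lt with rfl | hxlt'
    · exact h0.symm
    rcases hsd : SignType.sign (p.derivative.eval u) with _ | _ | _
    · rw [← k2 hsd]
    · have a1 := k3 hsd
      have a2 := l3 hsd
      have a3 := k4 hxlt (by rw [hsd]; decide)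
      have a4 := l4 hxlt' (by rw [hsd]; decide)
      rcases lt_trichotomy (p.eval u) 0 with h | h | h
      · rw [sign_neg h, sign_neg (by order)]
      · rw [h, sign_zero] at h0
        have := sign_eq_zero_iff.1 h0.symm
        exfalso; apply a3; order
      · rw [sign_pos h] at h0
        have := sign_eq_one_iff.1 h0.symm
        rw [sign_pos h, sign_pos (by order)]
    · have a1 := k1 hsd
      have a2 := l1 hsd
      have a3 := k4 hxlt (by rw [hsd]; decide)
      have a4 := l4 hxlt' (by rw [hsd]; decide)
      rcases lt_trichotomy (p.eval u) 0 with h | h | h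
      · rw [sign_neg h] at h0
        have := sign_eq_neg_one_iff.1 h0.symm
        rw [sign_neg h, sign_neg (by order)]
      · rw [h, sign_zero] at h0
        have := sign_eq_zero_iff.1 h0.symm
        exfalso; apply a3; order
      · rw [sign_pos h, sign_pos (by order)]

lemma pos_at_top : ∀ n : ℕ, ∀ p : R[X], p.natDegree = n → 0 < p.leadingCoeff →
    ∃ δ > 0, ∃ B, ∀ x > B, δ ≤ p.eval x := by
  intro n
  induction n with
  | zero =>
    intro p hp hl
    rw [Polynomial.eq_C_of_natDegree_eq_zero hp] at hl ⊢
    exact ⟨p.coeff 0, by simpa using hl, 0, fun x _ => by simp⟩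
  | succ n ih =>
    intro p hp hl
    have hd : p.divX.natDegree = n := by rw [natDegree_divX_eq_natDegree_tsub_one, hp]; rfl
    have hlc : p.divX.leadingCoeff = p.leadingCoeff := by
      rw [leadingCoeff, leadingCoeff, hd, hp, coeff_divX]
    obtain ⟨δ, hδ, B, hB⟩ := ih p.divX hd (by rw [hlc]; exact hl)
    refine ⟨δ, hδ, max B (max 0 (1 + |p.coeff 0| / δ)), fun x hx => ?_⟩
    have h1 : B < x := lt_of_le_of_lt (le_max_left _ _) hx
    have h2 : 0 < x := lt_of_le_of_lt ((le_max_left _ _).trans (le_max_right _ _)) hx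
    have h3 : 1 + |p.coeff 0| / δ < x := lt_of_le_of_lt ((le_max_right _ _).trans (le_max_right _ _)) hx
    have h4 := hB x h1
    have h7 := congrArg (eval x) p.divX_mul_X_add
    simp only [eval_add, eval_mul, eval_X, eval_C] at h7
    rw [← h7]
    have h5 : |p.coeff 0| < δ * (x - 1) := by
      have : |p.coeff 0| / δ < x - 1 := by linarith
      rw [div_lt_iff₀ hδ] at this; linarith
    have h6 := neg_abs_le (p.coeff 0)
    nlinarith

end ivp
end RMP

namespace RMP
open Polynomial
set_option linter.unusedSectionVars false

section move
variable {R1 : Type*} [Field R1] [LinearOrder R1] [IsStrictOrderedRing R1]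
variable {R2 : Type*} [Field R2] [LinearOrder R2] [IsStrictOrderedRing R2]

structure Setup (ρ : R1 → R2 → Prop) (Z1 : Set R1) (Z2 : Set R2) (p1 : R1[X]) (p2 : R2[X]) : Prop where
  fin2 : Z2.Finite
  mem : ∀ y z, ρ y z → (y ∈ Z1 ↔ z ∈ Z2)
  tot1 : ∀ y, ∃ z, ρ y z
  tot2 : ∀ z, ∃ y, ρ y z
  ordl : ∀ a b y z, ρ a b → ρ y z → a ∈ Z1 → a < y → b < z
  ordr : ∀ a b y z, ρ a b → ρ y z → a ∈ Z1 → y < a → z < b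
  sgn : ∀ a b, ρ a b → a ∈ Z1 → SignType.sign (p1.eval a) = SignType.sign (p2.eval b)
  der : ∀ a b, ρ a b → SignType.sign (p1.derivative.eval a) = SignType.sign (p2.derivative.eval b)
  root1 : ∀ a, p1.derivative.eval a = 0 → a ∈ Z1
  conv : ∀ y z z0, ρ y z0 → (∀ x, min z z0 ≤ x → x ≤ max z z0 → x ∉ Z2) → ρ y z
  deg : p1.natDegree = p2.natDegree
  lc : SignType.sign p1.leadingCoeff = SignType.sign p2.leadingCoeff

variable {ρ : R1 → R2 → Prop} {Z1 : Set R1} {Z2 : Set R2} {p1 : R1[X]} {p2 : R2[X]}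

lemma Setup.neg (h : Setup ρ Z1 Z2 p1 p2) : Setup ρ Z1 Z2 (-p1) (-p2) where
  fin2 := h.fin2
  mem := h.mem
  tot1 := h.tot1
  tot2 := h.tot2
  ordl := h.ordl
  ordr := h.ordr
  sgn a b h1 h2 := by simp [Left.sign_neg, h.sgn a b h1 h2]
  der a b h1 := by simp [Left.sign_neg, h.der a b h1]
  root1 a h1 := h.root1 a (by simpa using h1)
  conv := h.conv
  deg := by simp [h.deg]
  lc := by simp [Left.sign_neg, h.lc]

lemma sign_pow_neg_one_mul {R : Type*} [Field R] [LinearOrder R] [IsStrictOrderedRing R] (n : ℕ) (a : R) :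
    SignType.sign ((-1) ^ n * a) = (-1) ^ n * SignType.sign a := by
  rw [sign_mul, sign_pow]; simp [Left.sign_neg]

lemma Setup.flip (h : Setup ρ Z1 Z2 p1 p2) :
    Setup (fun y z => ρ (-y) (-z)) (Neg.neg ⁻¹' Z1) (Neg.neg ⁻¹' Z2) (p1.comp (-X)) (p2.comp (-X)) where
  fin2 := h.fin2.preimage neg_injective.injOn
  mem y z := h.mem _ _
  tot1 y := by obtain ⟨z, hz⟩ := h.tot1 (-y); exact ⟨-z, by simpa using hz⟩
  tot2 y := by obtain ⟨z, hz⟩ := h.tot2 (-y); exact ⟨-z, by simpa using hz⟩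
  ordl a b y z h1 h2 h3 h4 := neg_lt_neg_iff.1 (h.ordr _ _ _ _ h1 h2 h3 (neg_lt_neg h4))
  ordr a b y z h1 h2 h3 h4 := neg_lt_neg_iff.1 (h.ordl _ _ _ _ h1 h2 h3 (neg_lt_neg h4))
  sgn a b h1 h2 := by simpa using h.sgn _ _ h1 h2
  der a b h1 := by
    have := h.der _ _ h1
    simp [derivative_comp, Left.sign_neg, this]
  root1 a h1 := h.root1 _ (by simpa [derivative_comp] using h1)
  conv y z z0 h1 h2 := by
    apply h.conv _ _ _ h1
    intro x hx hx' hxZ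
    apply h2 (-x) _ _ (by simpa using hxZ)
    · rw [max_neg_neg] at hx'; exact le_neg_of_le_neg hx'
    · rw [min_neg_neg] at hx; exact neg_le_of_neg_le hx
  deg := by simp [natDegree_comp, h.deg]
  lc := by
    rw [leadingCoeff_comp (by simp), leadingCoeff_comp (by simp)]
    simp only [leadingCoeff_neg, leadingCoeff_X]
    rw [mul_comm, mul_comm p2.leadingCoeff, sign_pow_neg_one_mul, sign_pow_neg_one_mul, h.lc, h.deg]

/-- behaviour at minus infinity -/
lemma neg_at_bot {R : Type*} [Field R] [LinearOrder R] [IsStrictOrderedRing R] (p : R[X]) (z : R)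
    (h : (-1) ^ p.natDegree * SignType.sign p.leadingCoeff = -1) : ∃ b < z, p.eval b < 0 := by
  obtain ⟨δ, hδ, B, hB⟩ := pos_at_top _ (-(p.comp (-X))) rfl (by
    rw [leadingCoeff_neg, leadingCoeff_comp (by simp)]
    simp only [leadingCoeff_neg, leadingCoeff_X]
    rw [mul_comm, ← sign_eq_one_iff, Left.sign_neg, sign_pow_neg_one_mul, h]; rfl)
  refine ⟨-(max B (-z) + 1), ?_, ?_⟩
  · have := le_max_right B (-z); linarith
  · have := hB (max B (-z) + 1) (by have := le_max_left B (-z); linarith)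
    simp only [eval_neg, eval_comp, eval_X] at this
    linarith

lemma pos_at_bot {R : Type*} [Field R] [LinearOrder R] [IsStrictOrderedRing R] (p : R[X]) (z : R)
    (h : (-1) ^ p.natDegree * SignType.sign p.leadingCoeff = 1) : ∃ b < z, 0 < p.eval b := by
  obtain ⟨b, h1, h2⟩ := neg_at_bot (-p) z (by simp [Left.sign_neg, h])
  exact ⟨b, h1, by simpa using h2⟩

lemma core (i1 : IVP R1) (i2 : IVP R2) (h : Setup ρ Z1 Z2 p1 p2) (y : R1) (z0 : R2) (hy : y ∉ Z1) (hyz : ρ y z0)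
    (hd : 0 < p1.derivative.eval y)
    (hs : SignType.sign (p1.eval y) < SignType.sign (p2.eval z0)) :
    ∃ z, ρ y z ∧ SignType.sign (p1.eval y) = SignType.sign (p2.eval z) := by
  have hz0 : z0 ∉ Z2 := fun h' => hy ((h.mem _ _ hyz).2 h')
  have hy0 : p1.eval y ≤ 0 := by
    by_contra hc
    rw [sign_pos (not_le.1 hc)] at hs
    exact absurd hs (not_lt.2 (by cases SignType.sign (p2.eval z0) <;> decide))
  -- monotonicity
  have mono : ∀ a < y, (∀ x, a < x → x < y → x ∉ Z1) → p1.eval a < p1.eval y := by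
    intro a ha hno
    obtain ⟨c, h1, h2, h3⟩ := mvt i1 p1 a y ha
    have : SignType.sign (p1.derivative.eval c) = SignType.sign (p1.derivative.eval y) := by
      apply ivp_noroot i1 _ _ _ h2.le
      intro x hx hx' h0
      rcases hx'.eq_or_lt with rfl | hx'
      · exact hy (h.root1 _ h0)
      · exact hno x (by order) hx' (h.root1 _ h0)
    rw [sign_pos hd, sign_eq_one_iff] at this
    have := mul_pos this (sub_pos.2 ha)
    linarith
  obtain ⟨b, hb, hpb, hnob⟩ : ∃ b < z0, p2.eval b < 0 ∧ ∀ x, b < x → x ≤ z0 → x ∉ Z2 := by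
    by_cases hne : (Z2 ∩ Set.Iio z0).Nonempty
    · obtain ⟨b, ⟨hbZ, hb⟩, hmax⟩ := Set.exists_max_image (Z2 ∩ Set.Iio z0) id
        (h.fin2.subset Set.inter_subset_left) hne
      have hno : ∀ x, b < x → x ≤ z0 → x ∉ Z2 := by
        intro x hx hx' hxZ
        rcases hx'.eq_or_lt with rfl | hx'
        · exact hz0 hxZ
        · exact absurd (hmax x ⟨hxZ, hx'⟩) (not_le.2 hx)
      refine ⟨b, hb, ?_, hno⟩
      obtain ⟨a, hab⟩ := h.tot2 b
      have haZ : a ∈ Z1 := (h.mem _ _ hab).2 hbZ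
      have hay : a < y := by
        rcases lt_trichotomy a y with h' | h' | h'
        · exact h'
        · exact absurd (h' ▸ haZ) hy
        · exact absurd (h.ordr _ _ _ _ hab hyz haZ h') (not_lt.2 (le_of_lt hb))
      have := mono a hay (by
        intro x hx hx' hxZ
        obtain ⟨w, hw⟩ := h.tot1 x
        exact hno w (h.ordl _ _ _ _ hab hw haZ hx) (h.ordl _ _ _ _ hw hyz hxZ hx').le ((h.mem _ _ hw).1 hxZ))
      have hs' := h.sgn a b hab haZ
      rw [sign_neg (by linarith : p1.eval a < 0)] at hs'
      exact sign_eq_neg_one_iff.1 hs'.symm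
    · have hno2 : ∀ x < z0, x ∉ Z2 := fun x hx hxZ => hne ⟨x, hxZ, hx⟩
      have hno1 : ∀ x < y, x ∉ Z1 := by
        intro x hx hxZ
        obtain ⟨w, hw⟩ := h.tot1 x
        exact hno2 w (h.ordl _ _ _ _ hw hyz hxZ hx) ((h.mem _ _ hw).1 hxZ)
      have hneg : ∀ a < y, p1.eval a < 0 := fun a ha =>
        (mono a ha (fun x _ hx => hno1 x hx)).trans_le hy0
      have hsg : (-1) ^ p1.natDegree * SignType.sign p1.leadingCoeff = -1 := by
        rcases hh : (-1) ^ p1.natDegree * SignType.sign p1.leadingCoeff with _ | _ | _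
        · exfalso
          have : p1.leadingCoeff = 0 := by
            have h3 : ((-1 : SignType) ^ p1.natDegree) ≠ 0 := by
              rcases neg_one_pow_eq_or SignType p1.natDegree with h4 | h4 <;> rw [h4] <;> decide
            have := (mul_eq_zero.1 hh).resolve_left h3
            exact sign_eq_zero_iff.1 this
          rw [leadingCoeff_eq_zero] at this
          rw [this] at hd; simp at hd
        · rfl
        · obtain ⟨b, h1, h2⟩ := pos_at_bot p1 y hh
          exact absurd (hneg b h1) (not_lt.2 h2.le)
      rw [h.deg, h.lc] at hsg
      obtain ⟨b, h1, h2⟩ := neg_at_bot p2 z0 hsg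
      refine ⟨b, h1, h2, fun x _ hx' hxZ => ?_⟩
      rcases hx'.eq_or_lt with rfl | hx'
      · exact hz0 hxZ
      · exact hno2 x hx' hxZ
  have fin : ∀ z, b < z → z < z0 → ρ y z := by
    intro z h1 h2
    apply h.conv _ _ _ hyz
    intro x hx hx'
    rw [min_eq_left h2.le] at hx
    rw [max_eq_right h2.le] at hx'
    exact hnob x (by order) hx'
  rcases hy0.eq_or_lt with hy0 | hy0
  · rw [hy0, sign_zero] at hs ⊢
    have hp : 0 < p2.eval z0 := by
      rw [← sign_eq_one_iff]
      revert hs; cases SignType.sign (p2.eval z0) <;> decide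
    obtain ⟨c, h1, h2, h3⟩ := i2 p2 b z0 hb (Or.inl ⟨hpb, hp⟩)
    exact ⟨c, fin c h1 h2, by simp [h3]⟩
  · rw [sign_neg hy0] at hs ⊢
    have hp : 0 ≤ p2.eval z0 := by
      by_contra hc
      rw [sign_neg (not_le.1 hc)] at hs
      exact lt_irrefl _ hs
    obtain ⟨c, h1, h2, h3⟩ := i2 (p2 - C (p2.eval b / 2)) b z0 hb (Or.inl ⟨by simp; linarith, by simp; linarith⟩)
    refine ⟨c, fin c h1 h2, ?_⟩
    simp at h3
    rw [sign_neg (by linarith)]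

lemma move (i1 : IVP R1) (i2 : IVP R2) (h : Setup ρ Z1 Z2 p1 p2) (y : R1) (z0 : R2) (hy : y ∉ Z1) (hyz : ρ y z0) :
    ∃ z, ρ y z ∧ SignType.sign (p1.eval y) = SignType.sign (p2.eval z) := by
  have key : ∀ (q1 : R1[X]) (q2 : R2[X]), Setup ρ Z1 Z2 q1 q2 → 0 < q1.derivative.eval y → 
      ∃ z, ρ y z ∧ SignType.sign (q1.eval y) = SignType.sign (q2.eval z) := by
    intro q1 q2 h hd
    rcases lt_trichotomy (SignType.sign (q1.eval y)) (SignType.sign (q2.eval z0)) with hs | hs | hs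
    · exact core i1 i2 h y z0 hy hyz hd hs
    · exact ⟨z0, hyz, hs⟩
    · obtain ⟨z, h1, h2⟩ := core i1 i2 h.flip.neg (-y) (-z0) (by simpa using hy) (by simpa using hyz)
        (by simpa [derivative_comp] using hd) (by
          simp only [eval_neg, eval_comp, eval_X, neg_neg, Left.sign_neg]
          revert hs
          generalize SignType.sign (q1.eval y) = s; generalize SignType.sign (q2.eval z0) = t
          revert s t; decide)
      refine ⟨-z, by simpa using h1, ?_⟩
      simp only [eval_neg, eval_comp, eval_X, neg_neg, Left.sign_neg] at h2
      exact neg_injective h2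
  have hd : p1.derivative.eval y ≠ 0 := fun h0 => hy (h.root1 _ h0)
  rcases lt_or_gt_of_ne hd with hd | hd
  · obtain ⟨z, h1, h2⟩ := key _ _ h.neg (by simpa using hd)
    refine ⟨z, h1, ?_⟩
    simp only [eval_neg, Left.sign_neg] at h2
    exact neg_injective h2
  · exact key _ _ h hd
end move
end RMP

namespace RMP
open Polynomial
set_option linter.unusedSectionVars false

section clos
variable {D : Type*} [CommRing D]

lemma map_eraseLead' {R : Type*} [CommRing R] (φ : D →+* R) (g : D[X]) (h : φ g.leadingCoeff = 0) :
    g.eraseLead.map φ = g.map φ := by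
  have := congrArg (Polynomial.map φ) (eraseLead_add_C_mul_X_pow g)
  rw [Polynomial.map_add, Polynomial.map_mul, map_C, h, C_0, zero_mul, add_zero] at this
  exact this

lemma exists_prem (g : D[X]) (hg : 0 < g.natDegree) : ∀ n : ℕ, ∀ f : D[X], f.natDegree ≤ n →
    ∃ (k : ℕ) (q r : D[X]), r.natDegree < g.natDegree ∧ C g.leadingCoeff ^ k * f = q * g + r := by
  intro n
  induction n with
  | zero => intro f hf; exact ⟨0, 0, f, by omega, by simp⟩
  | succ n ih =>
    intro f hf
    by_cases h : f.natDegree < g.natDegree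
    · exact ⟨0, 0, f, h, by simp⟩
    push Not at h
    let f1 := C g.leadingCoeff * f - C f.leadingCoeff * X ^ (f.natDegree - g.natDegree) * g
    have hf1 : f1.natDegree ≤ n := by
      have hle : f1.natDegree ≤ f.natDegree := by
        refine (natDegree_sub_le _ _).trans (max_le ?_ ?_)
        · exact natDegree_C_mul_le _ _
        · rw [mul_assoc]
          refine (natDegree_C_mul_le _ _).trans (natDegree_mul_le.trans ?_)
          have := natDegree_X_pow_le (R := D) (f.natDegree - g.natDegree)
          omega
      have hc : f1.coeff f.natDegree = 0 := by
        simp only [f1, coeff_sub, coeff_C_mul, mul_assoc]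
        rw [coeff_X_pow_mul', if_pos (by omega)]
        rw [show f.natDegree - (f.natDegree - g.natDegree) = g.natDegree by omega]
        rw [coeff_natDegree, coeff_natDegree]; ring
      by_contra hc'
      have h2 : f1.natDegree = f.natDegree := by omega
      rw [← h2, ← leadingCoeff, leadingCoeff_eq_zero] at hc
      rw [hc] at hc'; simp at hc'
    obtain ⟨k, q, r, hr, he⟩ := ih f1 hf1
    refine ⟨k + 1, q + C g.leadingCoeff ^ k * (C f.leadingCoeff * X ^ (f.natDegree - g.natDegree)), r, hr, ?_⟩
    have : C g.leadingCoeff ^ (k + 1) * f = C g.leadingCoeff ^ k * f1 +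
      C g.leadingCoeff ^ k * (C f.leadingCoeff * X ^ (f.natDegree - g.natDegree)) * g := by
      simp only [f1]; ring
    rw [this, he]; ring

lemma exists_prem2 (f g : D[X]) (hg : 0 < g.natDegree) :
    ∃ (k : ℕ) (q r : D[X]), r.natDegree < g.natDegree ∧ C g.leadingCoeff ^ (2 * k) * f = q * g + r := by
  obtain ⟨k, q, r, h1, h2⟩ := exists_prem g hg _ f le_rfl
  refine ⟨k, C g.leadingCoeff ^ k * q, C g.leadingCoeff ^ k * r, ?_, ?_⟩
  · rw [← C_pow]; exact (natDegree_C_mul_le _ _).trans_lt h1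
  · rw [two_mul, pow_add, mul_assoc, h2]; ring

structure Closed (F : Finset D[X]) : Prop where
  der : ∀ g ∈ F, 0 < g.natDegree → derivative g ∈ F
  era : ∀ g ∈ F, 0 < g.natDegree → g.eraseLead ∈ F
  prem : ∀ f ∈ F, ∀ g ∈ F, 0 < g.natDegree → g.natDegree ≤ f.natDegree → ∃ (k : ℕ) (q r : D[X]), 
    r ∈ F ∧ r.natDegree < g.natDegree ∧ C g.leadingCoeff ^ (2 * k) * f = q * g + r

open Classical in
/-- The one-step operation. -/
noncomputable def op (f g : D[X]) : Finset D[X] :=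
  if h : 0 < g.natDegree ∧ g.natDegree ≤ f.natDegree then
    {derivative g, g.eraseLead, (exists_prem2 f g h.1).choose_spec.choose_spec.choose} else ∅

lemma op_lt {f g u : D[X]} (hu : u ∈ op f g) : u.natDegree < g.natDegree ∧ u.natDegree < f.natDegree := by
  unfold op at hu
  split_ifs at hu with h
  · have : u.natDegree < g.natDegree := by
      simp only [Finset.mem_insert, Finset.mem_singleton] at hu
      rcases hu with rfl | rfl | rfl
      · exact natDegree_derivative_lt h.1.ne'
      · have := eraseLead_natDegree_le g; omega
      · exact (exists_prem2 f g h.1).choose_spec.choose_spec.choose_spec.1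
    omega
  · simp at hu

lemma closed_of_op (F : Finset D[X]) (h : ∀ f ∈ F, ∀ g ∈ F, op f g ⊆ F) : Closed F where
  der g hg h0 := h g hg g hg (by unfold op; rw [dif_pos ⟨h0, le_rfl⟩]; simp)
  era g hg h0 := h g hg g hg (by unfold op; rw [dif_pos ⟨h0, le_rfl⟩]; simp)
  prem f hf g hg h0 h1 := by
    have := (exists_prem2 f g h0).choose_spec.choose_spec.choose_spec
    refine ⟨_, _, _, h f hf g hg ?_, this.1, this.2⟩
    unfold op; rw [dif_pos ⟨h0, h1⟩]; simp

open Classical in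
noncomputable def clo (s : Finset D[X]) : ℕ → Finset D[X]
  | 0 => s
  | k + 1 => clo s k ∪ (clo s k ×ˢ clo s k).biUnion (fun fg => op fg.1 fg.2)

lemma clo_mono (s : Finset D[X]) (k : ℕ) : clo s k ⊆ clo s (k + 1) := by
  intro x hx; simp only [clo, Finset.mem_union]; exact Or.inl hx

lemma clo_succ {s : Finset D[X]} {k : ℕ} {u : D[X]} (hu : u ∈ clo s (k + 1)) :
    u ∈ clo s k ∨ ∃ f ∈ clo s k, ∃ g ∈ clo s k, u ∈ op f g := by
  simp only [clo, Finset.mem_union, Finset.mem_biUnion, Finset.mem_product, Prod.exists] at hu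
  rcases hu with h | ⟨f, g, ⟨h1, h2⟩, h3⟩
  · exact Or.inl h
  · exact Or.inr ⟨f, h1, g, h2, h3⟩

lemma op_mem_clo {s : Finset D[X]} {k : ℕ} {f g u : D[X]} (hf : f ∈ clo s k) (hg : g ∈ clo s k)
    (hu : u ∈ op f g) : u ∈ clo s (k + 1) := by
  simp only [clo, Finset.mem_union, Finset.mem_biUnion, Finset.mem_product, Prod.exists]
  exact Or.inr ⟨f, g, ⟨hf, hg⟩, hu⟩

lemma clo_bound (s : Finset D[X]) (N : ℕ) (hN : ∀ f ∈ s, f.natDegree ≤ N) :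
    ∀ k, ∀ u ∈ clo s k, u.natDegree ≤ N := by
  intro k
  induction k with
  | zero => exact hN
  | succ k ih =>
    intro u hu
    rcases clo_succ hu with h | ⟨f, hf, g, hg, h⟩
    · exact ih u h
    · have := op_lt h; have := ih f hf; omega

lemma clo_stab (s : Finset D[X]) (N : ℕ) (hN : ∀ f ∈ s, f.natDegree ≤ N) :
    ∀ k, ∀ u ∈ clo s (k + 1), N < u.natDegree + k + 1 → u ∈ clo s k := by
  intro k
  induction k with
  | zero =>
    intro u hu h
    rcases clo_succ hu with h' | ⟨f, hf, g, hg, h'⟩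
    · exact h'
    · have := op_lt h'; have := clo_bound s N hN 0 f hf; omega
  | succ k ih =>
    intro u hu h
    rcases clo_succ hu with h' | ⟨f, hf, g, hg, h'⟩
    · exact h'
    · have := op_lt h'
      exact op_mem_clo (ih f hf (by omega)) (ih g hg (by omega)) h'

lemma exists_closed (s : Finset D[X]) : ∃ F : Finset D[X], s ⊆ F ∧ Closed F := by
  let N := s.sup natDegree
  have hN : ∀ f ∈ s, f.natDegree ≤ N := fun f hf => Finset.le_sup hf
  have hs : ∀ k, s ⊆ clo s k := by
    intro k
    induction k with
    | zero => exact subset_rfl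
    | succ k ih => exact ih.trans (clo_mono s k)
  refine ⟨clo s N, hs N, closed_of_op _ fun f hf g hg u hu => ?_⟩
  exact clo_stab s N hN N u (op_mem_clo hf hg hu) (by omega)
end clos

section horm
variable {R1 : Type*} [Field R1] [LinearOrder R1] [IsStrictOrderedRing R1]
variable {R2 : Type*} [Field R2] [LinearOrder R2] [IsStrictOrderedRing R2]
variable {D : Type*} [CommRing D]

def Agree (φ1 : D →+* R1) (φ2 : D →+* R2) (S : Finset D[X]) (y : R1) (z : R2) : Prop :=
  ∀ g ∈ S, SignType.sign ((g.map φ1).eval y) = SignType.sign ((g.map φ2).eval z)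

def LowerIn (F S : Finset D[X]) : Prop := ∀ g ∈ F, ∀ u ∈ S, g.natDegree < u.natDegree → g ∈ S

lemma proper (φ1 : D →+* R1) (φ2 : D →+* R2) {F S : Finset D[X]} (hF : Closed F) (hSF : S ⊆ F)
    (hS : LowerIn F S) (hlc : ∀ f ∈ F, SignType.sign (φ1 f.leadingCoeff) = SignType.sign (φ2 f.leadingCoeff)) :
    ∀ n : ℕ, ∀ g ∈ S, g.natDegree ≤ n → (g.map φ1 ≠ 0 ∨ g.map φ2 ≠ 0) → ∃ g' ∈ S, g'.map φ1 = g.map φ1 ∧ 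
      g'.map φ2 = g.map φ2 ∧ φ1 g'.leadingCoeff ≠ 0 ∧ φ2 g'.leadingCoeff ≠ 0 := by
  intro n
  induction n with
  | zero =>
    intro g hg hn h0
    refine ⟨g, hg, rfl, rfl, ?_⟩
    rw [eq_C_of_natDegree_le_zero hn] at h0
    have hl := hlc g (hSF hg)
    have hl2 : φ1 g.leadingCoeff = 0 ↔ φ2 g.leadingCoeff = 0 := by
      rw [← sign_eq_zero_iff, hl, sign_eq_zero_iff]
    have : g.leadingCoeff = g.coeff 0 := by rw [leadingCoeff, Nat.le_zero.1 hn]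
    rw [this] at hl2 ⊢
    simp only [map_C, ne_eq, C_eq_zero] at h0
    tauto
  | succ n ih =>
    intro g hg hn h0
    have hl := hlc g (hSF hg)
    have hl2 : φ1 g.leadingCoeff = 0 ↔ φ2 g.leadingCoeff = 0 := by
      rw [← sign_eq_zero_iff, hl, sign_eq_zero_iff]
    by_cases h1 : φ1 g.leadingCoeff = 0
    · have h2 := hl2.1 h1
      rcases Nat.eq_zero_or_pos g.natDegree with hd | hd
      · exact ih g hg (by omega) h0
      have e1 : g.eraseLead.map φ1 = g.map φ1 := map_eraseLead' φ1 g h1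
      have e2 : g.eraseLead.map φ2 = g.map φ2 := map_eraseLead' φ2 g h2
      have hle := eraseLead_natDegree_le g
      obtain ⟨g', a, b, c, d⟩ := ih g.eraseLead (hS _ (hF.era g (hSF hg) hd) g hg (by omega)) (by omega) (by
        rw [e1, e2]; exact h0)
      exact ⟨g', a, b.trans e1, c.trans e2, d⟩
    · exact ⟨g, hg, rfl, rfl, h1, fun h => h1 (hl2.2 h)⟩

lemma iter_mem {F S : Finset D[X]} (hF : Closed F) (hSF : S ⊆ F) (hS : LowerIn F S) {g : D[X]} (hg : g ∈ S) :
    ∀ k, (derivative^[k] g) ∈ S ∨ (derivative^[k] g) = 0 := by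
  intro k
  induction k with
  | zero => exact Or.inl hg
  | succ k ih =>
    rw [Function.iterate_succ_apply']
    rcases ih with h | h
    · rcases Nat.eq_zero_or_pos (derivative^[k] g).natDegree with hd | hd
      · right; exact derivative_of_natDegree_zero hd
      · left; exact hS _ (hF.der _ (hSF h) hd) _ h (natDegree_derivative_lt hd.ne')
    · right; rw [h]; simp

/-- same signs at both end points implies constant sign -/
lemma thomS (i1 : IVP R1) (φ1 : D →+* R1) {F S : Finset D[X]} (hF : Closed F) (hSF : S ⊆ F) (hS : LowerIn F S)
    {g : D[X]} (hg : g ∈ S) (u v : R1) (huv : u ≤ v) 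
    (h : ∀ k ∈ S, k.natDegree ≤ g.natDegree → SignType.sign ((k.map φ1).eval u) = SignType.sign ((k.map φ1).eval v))
    (x : R1) (hx : u ≤ x) (hx' : x ≤ v) :
    SignType.sign ((g.map φ1).eval x) = SignType.sign ((g.map φ1).eval u) := by
  apply thom i1 _ _ le_rfl u v huv _ x hx hx'
  intro k
  rw [iterate_derivative_map]
  rcases iter_mem hF hSF hS hg k with h' | h'
  · apply h _ h'
    have := natDegree_iterate_derivative g k
    omega
  · rw [h']; simp

lemma order_aux (i1 : IVP R1) (i2 : IVP R2) (φ1 : D →+* R1) (φ2 : D →+* R2) {F S : Finset D[X]} (hF : Closed F)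
    (hSF : S ⊆ F) (hS : LowerIn F S) {y y' : R1} {z z' : R2} (h : Agree φ1 φ2 S y z) (h' : Agree φ1 φ2 S y' z')
    (hy : y < y') (hz : z' ≤ z) : ∀ n : ℕ, ∀ g ∈ S, g.natDegree = n → 
      SignType.sign ((g.map φ1).eval y) = SignType.sign ((g.map φ1).eval y') := by
  intro n
  induction n using Nat.strong_induction_on with
  | _ n ih =>
  intro g hg hn
  rcases Nat.eq_zero_or_pos n with rfl | hn0
  · rw [eq_C_of_natDegree_eq_zero hn]; simp
  have hdm : derivative g ∈ S := hS _ (hF.der g (hSF hg) (by omega)) g hg (natDegree_derivative_lt (by omega))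
  have hdd : (derivative g).natDegree < n := hn ▸ natDegree_derivative_lt (by omega)
  have t1 := thomS i1 φ1 hF hSF hS hdm y y' hy.le (fun k hk hkd => ih k.natDegree (by omega) k hk rfl)
  have t2 := thomS i2 φ2 hF hSF hS hdm z' z hz (fun k hk hkd => by
    rw [← h k hk, ← h' k hk, ih k.natDegree (by omega) k hk rfl])
  have e := h' _ hdm
  rw [t1 y' hy.le le_rfl] at e
  have t2' : ∀ x, z' ≤ x → x ≤ z → SignType.sign ((g.map φ2).derivative.eval x) = 
      SignType.sign ((g.map φ1).derivative.eval y) := by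
    intro x h1 h2
    rw [derivative_map, derivative_map, e]; exact t2 x h1 h2
  have t1' : ∀ x, y ≤ x → x ≤ y' → SignType.sign ((g.map φ1).derivative.eval x) = 
      SignType.sign ((g.map φ1).derivative.eval y) := by
    intro x h1 h2
    rw [derivative_map]; exact t1 x h1 h2
  obtain ⟨c, c1, c2, c3⟩ := mvt i1 (g.map φ1) y y' hy
  have hc := t1' c c1.le c2.le
  have hyp : 0 < y' - y := sub_pos.2 hy
  have a1 := h g hg
  have a2 := h' g hg
  have m2 : ∃ d, SignType.sign d = SignType.sign ((g.map φ1).derivative.eval y) ∧ 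
      (g.map φ2).eval z - (g.map φ2).eval z' = d * (z - z') := by
    rcases hz.eq_or_lt with rfl | hz
    · refine ⟨(g.map φ2).derivative.eval z', t2' _ le_rfl le_rfl, by simp⟩
    · obtain ⟨d, d1, d2, d3⟩ := mvt i2 (g.map φ2) z' z hz
      exact ⟨_, t2' d d1.le d2.le, d3⟩
  obtain ⟨d, d1, d2⟩ := m2
  have hzz : 0 ≤ z - z' := sub_nonneg.2 hz
  rcases hsd : SignType.sign ((g.map φ1).derivative.eval y) with _ | _ | _
  · rw [hsd] at hc
    rw [sign_eq_zero_iff.1 hc, zero_mul, sub_eq_zero] at c3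
    rw [c3]
  · rw [hsd] at hc d1
    have p1 := mul_neg_of_neg_of_pos (sign_eq_neg_one_iff.1 hc) hyp
    have p2 := mul_nonpos_of_nonpos_of_nonneg (sign_eq_neg_one_iff.1 d1).le hzz
    apply le_antisymm
    · rw [a1, a2]; exact SignType.sign.monotone (by linarith)
    · exact SignType.sign.monotone (by linarith)
  · rw [hsd] at hc d1
    have p1 := mul_pos (sign_eq_one_iff.1 hc) hyp
    have p2 := mul_nonneg (sign_eq_one_iff.1 d1).le hzz
    apply le_antisymm
    · exact SignType.sign.monotone (by linarith)
    · rw [a1, a2]; exact SignType.sign.monotone (by linarith)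

def Zset (φ1 : D →+* R1) (S : Finset D[X]) : Set R1 := {x | ∃ g ∈ S, g.map φ1 ≠ 0 ∧ (g.map φ1).eval x = 0}

lemma Zset_finite (φ1 : D →+* R1) (S : Finset D[X]) : (Zset φ1 S).Finite := by
  have : Zset φ1 S ⊆ ⋃ g ∈ S, (g.map φ1).rootSet R1 := by
    rintro x ⟨g, hg, h0, hx⟩
    simp only [Set.mem_iUnion]
    exact ⟨g, hg, by rw [mem_rootSet]; exact ⟨h0, by simpa using hx⟩⟩
  exact (S.finite_toSet.biUnion (fun g _ => rootSet_finite _ _)).subset this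

lemma order_lt (i1 : IVP R1) (i2 : IVP R2) (φ1 : D →+* R1) (φ2 : D →+* R2) {F S : Finset D[X]} (hF : Closed F)
    (hSF : S ⊆ F) (hS : LowerIn F S) {y y' : R1} {z z' : R2} (h : Agree φ1 φ2 S y z) (h' : Agree φ1 φ2 S y' z')
    (hy : y < y') (hZ : y ∈ Zset φ1 S ∨ y' ∈ Zset φ1 S) : z < z' := by
  by_contra hc
  have key := order_aux i1 i2 φ1 φ2 hF hSF hS h h' hy (not_lt.1 hc)
  obtain ⟨g, hg, h0, hx⟩ : ∃ g ∈ S, g.map φ1 ≠ 0 ∧ (g.map φ1).eval y = 0 := by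
    rcases hZ with hZ | ⟨g, hg, h0, hx⟩
    · exact hZ
    · refine ⟨g, hg, h0, ?_⟩
      have := key _ g hg rfl
      rw [hx, sign_zero] at this
      exact sign_eq_zero_iff.1 this
  have t := thomS i1 φ1 hF hSF hS hg y y' hy.le (fun k hk _ => key _ k hk rfl)
  apply h0
  apply eq_zero_of_infinite_isRoot
  apply (Set.Ioo_infinite hy).mono
  intro x hx'
  have := t x hx'.1.le hx'.2.le
  rw [hx, sign_zero] at this
  exact sign_eq_zero_iff.1 this

lemma Agree.symm {φ1 : D →+* R1} {φ2 : D →+* R2} {S : Finset D[X]} {y : R1} {z : R2} (h : Agree φ1 φ2 S y z) :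
    Agree φ2 φ1 S z y := fun g hg => (h g hg).symm

/-- The extension step, one direction. -/
lemma step (i1 : IVP R1) (i2 : IVP R2) (φ1 : D →+* R1) (φ2 : D →+* R2) {F S : Finset D[X]} (hF : Closed F)
    (hSF : S ⊆ F) (hS : LowerIn F S) (hlc : ∀ f ∈ F, SignType.sign (φ1 f.leadingCoeff) = SignType.sign (φ2 f.leadingCoeff))
    (f : D[X]) (hf : f ∈ F) (hmax : ∀ g ∈ S, g.natDegree ≤ f.natDegree)
    (hlow : ∀ g ∈ F, g.natDegree < f.natDegree → g ∈ S) 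
    (c1 : ∀ y, ∃ z, Agree φ1 φ2 S y z) (c2 : ∀ z, ∃ y, Agree φ1 φ2 S y z) (y : R1) :
    ∃ z, Agree φ1 φ2 S y z ∧ SignType.sign ((f.map φ1).eval y) = SignType.sign ((f.map φ2).eval z) := by
  obtain ⟨z0, hz0⟩ := c1 y
  have hl := hlc f hf
  have hl2 : φ1 f.leadingCoeff = 0 ↔ φ2 f.leadingCoeff = 0 := by
    rw [← sign_eq_zero_iff, hl, sign_eq_zero_iff]
  rcases Nat.eq_zero_or_pos f.natDegree with hd | hd
  · refine ⟨z0, hz0, ?_⟩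
    rw [leadingCoeff, hd] at hl
    rw [eq_C_of_natDegree_eq_zero hd]
    simpa using hl
  by_cases h1 : φ1 f.leadingCoeff = 0
  · have h2 := hl2.1 h1
    have hle := eraseLead_natDegree_le f
    have := hz0 _ (hlow _ (hF.era f hf hd) (by omega))
    refine ⟨z0, hz0, ?_⟩
    have e1 : f.eraseLead.map φ1 = f.map φ1 := map_eraseLead' φ1 f h1
    have e2 : f.eraseLead.map φ2 = f.map φ2 := map_eraseLead' φ2 f h2
    rwa [e1, e2] at this
  have h2 : φ2 f.leadingCoeff ≠ 0 := fun h => h1 (hl2.2 h)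
  -- signs at roots
  have hroot : ∀ a b, Agree φ1 φ2 S a b → a ∈ Zset φ1 S → 
      SignType.sign ((f.map φ1).eval a) = SignType.sign ((f.map φ2).eval b) := by
    rintro a b hab ⟨g, hg, g0, ga⟩
    obtain ⟨g', hg', e1, e2, l1, l2⟩ := proper φ1 φ2 hF hSF hS hlc _ g hg le_rfl (Or.inl g0)
    rw [← e1] at g0 ga
    have gb : (g'.map φ2).eval b = 0 := by
      have := hab g' hg'
      rw [ga, sign_zero] at this
      exact sign_eq_zero_iff.1 this.symm
    have gd : 0 < g'.natDegree := by
      rw [Nat.pos_iff_ne_zero]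
      intro h
      rw [eq_C_of_natDegree_eq_zero h] at g0 ga
      simp only [map_C, eval_C] at ga
      rw [map_C, ga] at g0
      simp at g0
    obtain ⟨k, q, r, hr, hrd, he⟩ := hF.prem f hf g' (hSF hg') gd (hmax g' hg')
    have hrS : r ∈ S := hS r hr g' hg' hrd
    have hrs := hab r hrS
    have q1 : φ1 g'.leadingCoeff ^ (2 * k) * (f.map φ1).eval a = (r.map φ1).eval a := by
      have := congrArg (fun p => (p.map φ1).eval a) he
      simpa [ga] using this
    have q2 : φ2 g'.leadingCoeff ^ (2 * k) * (f.map φ2).eval b = (r.map φ2).eval b := by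
      have := congrArg (fun p => (p.map φ2).eval b) he
      simpa [gb] using this
    rw [← q1, ← q2, sign_mul, sign_mul, pow_mul, pow_mul, sign_pos (pow_pos (sq_pos_of_ne_zero l1) k),
      sign_pos (pow_pos (sq_pos_of_ne_zero l2) k)] at hrs
    simpa using hrs
  by_cases hyZ : y ∈ Zset φ1 S
  · exact ⟨z0, hz0, hroot y z0 hz0 hyZ⟩
  have memiff : ∀ y z, Agree φ1 φ2 S y z → (y ∈ Zset φ1 S ↔ z ∈ Zset φ2 S) := by
    intro y z h
    constructor
    · rintro ⟨g, hg, g0, ga⟩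
      obtain ⟨g', hg', e1, e2, l1, l2⟩ := proper φ1 φ2 hF hSF hS hlc _ g hg le_rfl (Or.inl g0)
      refine ⟨g, hg, ?_, ?_⟩
      · rw [← e2]; intro h; apply l2
        have := congrArg (fun p => p.coeff g'.natDegree) h
        simpa using this
      · have := h g hg
        rw [ga, sign_zero] at this
        exact sign_eq_zero_iff.1 this.symm
    · rintro ⟨g, hg, g0, ga⟩
      obtain ⟨g', hg', e1, e2, l1, l2⟩ := proper φ1 φ2 hF hSF hS hlc _ g hg le_rfl (Or.inr g0)
      refine ⟨g, hg, ?_, ?_⟩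
      · rw [← e1]; intro h; apply l1
        have := congrArg (fun p => p.coeff g'.natDegree) h
        simpa using this
      · have := h g hg
        rw [ga, sign_zero] at this
        exact sign_eq_zero_iff.1 this
  have hder : derivative f ∈ S := hlow _ (hF.der f hf hd) (natDegree_derivative_lt hd.ne')
  have nd1 : (f.map φ1).natDegree = f.natDegree := natDegree_map_of_leadingCoeff_ne_zero _ h1
  have nd2 : (f.map φ2).natDegree = f.natDegree := natDegree_map_of_leadingCoeff_ne_zero _ h2
  have st : Setup (Agree φ1 φ2 S) (Zset φ1 S) (Zset φ2 S) (f.map φ1) (f.map φ2) := {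
    fin2 := Zset_finite _ _
    mem := memiff
    tot1 := c1
    tot2 := c2
    ordl := fun a b y z h h' ha hay => order_lt i1 i2 φ1 φ2 hF hSF hS h h' hay (Or.inl ha)
    ordr := fun a b y z h h' ha hay => order_lt i1 i2 φ1 φ2 hF hSF hS h' h hay (Or.inr ha)
    sgn := hroot
    der := fun a b h => by rw [derivative_map, derivative_map]; exact h _ hder
    root1 := fun a ha => by
      refine ⟨derivative f, hder, ?_, by rwa [derivative_map] at ha⟩
      rw [← derivative_map]
      intro h
      have := derivative_eq_zero.1 h
      omega
    conv := fun y z z0 h hno g hg => by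
      rw [h g hg]
      by_cases h0 : g.map φ2 = 0
      · simp [h0]
      have hno' : ∀ x, min z z0 ≤ x → x ≤ max z z0 → (g.map φ2).eval x ≠ 0 := 
        fun x hx hx' hz => hno x hx hx' ⟨g, hg, h0, hz⟩
      rcases le_total z z0 with hle | hle
      · rw [min_eq_left hle, max_eq_right hle] at hno'
        exact (ivp_noroot i2 _ _ _ hle hno').symm
      · rw [min_eq_right hle, max_eq_left hle] at hno'
        exact (ivp_noroot i2 _ _ _ hle hno')
    deg := nd1.trans nd2.symm
    lc := by
      rw [leadingCoeff, leadingCoeff, nd1, nd2, coeff_map, coeff_map]; exact hl }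
  exact move i1 i2 st y z0 hyZ hz0

lemma horm (i1 : IVP R1) (i2 : IVP R2) (φ1 : D →+* R1) (φ2 : D →+* R2) {F : Finset D[X]} (hF : Closed F)
    (hlc : ∀ f ∈ F, SignType.sign (φ1 f.leadingCoeff) = SignType.sign (φ2 f.leadingCoeff)) (S : Finset D[X]) :
    S ⊆ F → LowerIn F S → (∀ y, ∃ z, Agree φ1 φ2 S y z) ∧ (∀ z, ∃ y, Agree φ1 φ2 S y z) := by
  classical
  refine Finset.induction_on_max_value natDegree S ?_ ?_
  · intro _ _; exact ⟨fun y => ⟨0, fun g hg => absurd hg (by simp)⟩, fun y => ⟨0, fun g hg => absurd hg (by simp)⟩⟩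
  · intro f S hfS hmax ih hSF hS
    have hSF' : S ⊆ F := (Finset.subset_insert _ _).trans hSF
    have hf : f ∈ F := hSF (Finset.mem_insert_self _ _)
    have hS' : LowerIn F S := by
      intro g hg u hu hlt
      rcases Finset.mem_insert.1 (hS g hg u (Finset.mem_insert_of_mem hu) hlt) with rfl | h
      · have := hmax u hu; omega
      · exact h
    have hlow : ∀ g ∈ F, g.natDegree < f.natDegree → g ∈ S := by
      intro g hg hlt
      rcases Finset.mem_insert.1 (hS g hg f (Finset.mem_insert_self _ _) hlt) with rfl | h
      · omega
      · exact h
    obtain ⟨c1, c2⟩ := ih hSF' hS'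
    constructor
    · intro y
      obtain ⟨z, h1, h2⟩ := step i1 i2 φ1 φ2 hF hSF' hS' hlc f hf hmax hlow c1 c2 y
      refine ⟨z, fun g hg => ?_⟩
      rcases Finset.mem_insert.1 hg with rfl | hg
      · exact h2
      · exact h1 g hg
    · intro z
      obtain ⟨y, h1, h2⟩ := step i2 i1 φ2 φ1 hF hSF' hS' (fun f hf => (hlc f hf).symm) f hf hmax hlow
        (fun z => (c2 z).imp fun _ h => h.symm) (fun z => (c1 z).imp fun _ h => h.symm) z
      refine ⟨y, fun g hg => ?_⟩
      rcases Finset.mem_insert.1 hg with rfl | hg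
      · exact h2.symm
      · exact (h1 g hg).symm

lemma ivp_real : IVP ℝ := by
  intro f a b hab h
  have hc : ContinuousOn (fun x => f.eval x) (Set.Icc a b) := f.continuous.continuousOn
  rcases h with ⟨h1, h2⟩ | ⟨h1, h2⟩
  · obtain ⟨c, hc1, hc2⟩ := intermediate_value_Ioo hab.le hc ⟨h1, h2⟩
    exact ⟨c, hc1.1, hc1.2, hc2⟩
  · obtain ⟨c, hc1, hc2⟩ := intermediate_value_Ioo' hab.le hc ⟨h2, h1⟩
    exact ⟨c, hc1.1, hc1.2, hc2⟩

lemma eval_finSucc {R K : Type*} [CommRing K] [CommRing R] (ι : K →+* R) (n : ℕ) (a : Fin (n + 1) → R) (p : MvPolynomial (Fin (n+1)) K) :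
    MvPolynomial.eval₂Hom ι a p = 
    (((MvPolynomial.finSuccEquiv K n) p).map (MvPolynomial.eval₂Hom ι (fun i => a i.succ))).eval (a 0) := by
  induction p using MvPolynomial.induction_on with
  | C c => simp [MvPolynomial.finSuccEquiv_apply]
  | add p q hp hq => simp only [map_add, Polynomial.map_add, eval_add, hp, hq]
  | mul_X p i hp =>
    rw [map_mul, hp, map_mul, Polynomial.map_mul, eval_mul]
    congr 1
    refine Fin.cases ?_ (fun j => ?_) i
    · simp [MvPolynomial.finSuccEquiv_X_zero]
    · simp [MvPolynomial.finSuccEquiv_X_succ]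

/-- Transfer principle. -/
theorem transfer (i1 : IVP R1) (ι : ℝ →+* R1) : ∀ (n : ℕ) (G : Finset (MvPolynomial (Fin n) ℝ)) (a : Fin n → R1),
    ∃ b : Fin n → ℝ, ∀ g ∈ G, SignType.sign (MvPolynomial.eval₂Hom ι a g) = SignType.sign (MvPolynomial.eval b g) := by
  classical
  have hι : StrictMono ι := by
    apply Monotone.strictMono_of_injective _ ι.injective
    intro x y hxy
    have h := sub_nonneg.2 hxy
    have : ι (y - x) = ι (√(y - x)) * ι (√ (y - x)) := by rw [← map_mul, Real.mul_self_sqrt h]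
    rw [← sub_nonneg, ← map_sub, this]
    exact mul_self_nonneg _
  have hιs : ∀ x : ℝ, SignType.sign (ι x) = SignType.sign x := by
    intro x
    rcases lt_trichotomy x 0 with h | h | h
    · rw [sign_neg h, sign_neg (by simpa using hι h)]
    · simp [h]
    · rw [sign_pos h, sign_pos (by simpa using hι h)]
  intro n
  induction n with
  | zero =>
    intro G a
    refine ⟨fun i => 0, fun g _ => ?_⟩
    rw [MvPolynomial.eq_C_of_isEmpty g]
    simpa using hιs _
  | succ n ih =>
    intro G a
    obtain ⟨F, hGF, hF⟩ := exists_closed (G.image (MvPolynomial.finSuccEquiv ℝ n))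
    obtain ⟨b, hb⟩ := ih (F.image leadingCoeff) (fun i => a i.succ)
    have hlc : ∀ f ∈ F, SignType.sign (MvPolynomial.eval₂Hom ι (fun i => a i.succ) f.leadingCoeff) =
        SignType.sign (MvPolynomial.eval b f.leadingCoeff) := by
      intro f hf
      exact hb f.leadingCoeff (Finset.mem_image_of_mem leadingCoeff hf)
    have hLow : LowerIn F F := fun g hg _ _ _ => hg
    generalize hφ1 : MvPolynomial.eval₂Hom ι (fun i : Fin n => a i.succ) = φ1 at hlc
    generalize hφ2 : MvPolynomial.eval b = φ2 at hlc
    obtain ⟨z, hz⟩ := (horm i1 ivp_real φ1 φ2 hF hlc F (Finset.Subset.refl F) hLow).1 (a 0)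
    subst hφ1 hφ2
    refine ⟨Fin.cons z b, fun g hg => ?_⟩
    have := hz _ (hGF (Finset.mem_image_of_mem _ hg))
    rw [← eval_finSucc] at this
    rw [this]
    have e := eval_finSucc (RingHom.id ℝ) n (Fin.cons z b) g
    simp only [Fin.cons_zero, Fin.cons_succ] at e
    exact congrArg SignType.sign e.symm

end horm
end RMP

namespace RMP
set_option linter.unusedSectionVars false

section psatz
variable {B : Type*} [CommRing B]

/-- preordering generated by a set, as a subsemiring -/
def pre (S : Set B) : Subsemiring B := Subsemiring.closure (S ∪ Set.range (fun a : B => a * a))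

lemma sq_mem_pre (S : Set B) (a : B) : a * a ∈ pre S := Subsemiring.subset_closure (Or.inr ⟨a, rfl⟩)
lemma gen_mem_pre {S : Set B} {a : B} (h : a ∈ S) : a ∈ pre S := Subsemiring.subset_closure (Or.inl h)

lemma pre_le_adj (S : Set B) (x : B) : pre (insert x S) ≤ adj (pre S) (sq_mem_pre S) x := by
  unfold pre
  rw [Subsemiring.closure_le]
  rintro a ((rfl | ha) | ⟨a, rfl⟩)
  · exact mem_adj _ _ _
  · exact le_adj _ _ _ (gen_mem_pre ha)
  · exact le_adj _ _ _ (sq_mem_pre S a)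

variable [Algebra ℝ B]

lemma algHom_lift {P : Type*} [CommRing P] [Algebra ℝ P] (π : P →ₐ[ℝ] B) (hπ : Function.Surjective π)
    (e : P →ₐ[ℝ] ℝ) (h : ∀ g, π g = 0 → e g = 0) : ∃ χ : B →ₐ[ℝ] ℝ, ∀ g, χ (π g) = e g := by
  let q := Ideal.quotientKerAlgEquivOfSurjective hπ
  refine ⟨(Ideal.Quotient.liftₐ (RingHom.ker π) e (fun a ha => h a ha)).comp q.symm.toAlgHom, fun g => ?_⟩
  have : q.symm (π g) = Ideal.Quotient.mk _ g := by
    rw [AlgEquiv.symm_apply_eq]; rfl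
  simp only [AlgHom.comp_apply]
  change (Ideal.Quotient.liftₐ (RingHom.ker π) e _) (q.symm (π g)) = _
  rw [this]; rfl

theorem psatz [Algebra.FiniteType ℝ B] (S : Set B) (hS : S.Finite)
    (h : ∀ χ : B →ₐ[ℝ] ℝ, ∃ s ∈ S, χ s < 0) : (-1 : B) ∈ pre S := by
  classical
  by_contra hcon
  obtain ⟨R, _, _, _, φ, iR, hφ⟩ := exists_ivp_of_preordering (pre S) (sq_mem_pre S) hcon
  obtain ⟨n, π, hπ⟩ := Algebra.FiniteType.iff_quotient_mvPolynomial''.1 (inferInstance : Algebra.FiniteType ℝ B)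
  obtain ⟨J, hJ⟩ := (isNoetherianRing_iff_ideal_fg _).1 (inferInstance : IsNoetherianRing (MvPolynomial (Fin n) ℝ))
    (RingHom.ker π)
  let c : B → MvPolynomial (Fin n) ℝ := Function.surjInv hπ
  have hc : ∀ b, π (c b) = b := Function.surjInv_eq hπ
  obtain ⟨b, hb⟩ := transfer iR (φ.comp (algebraMap ℝ B)) n (J ∪ hS.toFinset.image c) (fun i => φ (π (MvPolynomial.X i)))
  have he : ∀ g, MvPolynomial.eval₂Hom (φ.comp (algebraMap ℝ B)) (fun i => φ (π (MvPolynomial.X i))) g = φ (π g) := by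
    intro g
    have : MvPolynomial.eval₂Hom (φ.comp (algebraMap ℝ B)) (fun i => φ (π (MvPolynomial.X i))) = φ.comp π.toRingHom := by
      apply MvPolynomial.ringHom_ext
      · intro r
        simp only [MvPolynomial.coe_eval₂Hom, MvPolynomial.eval₂_C]
        change _ = φ (π (algebraMap ℝ _ r))
        rw [AlgHom.commutes]; rfl
      · intro i
        simp
    rw [this]; rfl
  simp only [he] at hb
  have hker : ∀ g, π g = 0 → MvPolynomial.aeval b g = 0 := by
    have hle : RingHom.ker π ≤ RingHom.ker (MvPolynomial.aeval b : MvPolynomial (Fin n) ℝ →ₐ[ℝ] ℝ) := by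
      rw [← hJ, Ideal.span_le]
      intro g hg
      have h1 := hb g (Finset.mem_union_left _ hg)
      have h2 : π g = 0 := by
        have : g ∈ RingHom.ker π := hJ ▸ Ideal.subset_span hg
        exact this
      rw [h2, map_zero, sign_zero] at h1
      have := sign_eq_zero_iff.1 h1.symm
      rw [SetLike.mem_coe, RingHom.mem_ker]
      rwa [MvPolynomial.aeval_eq_eval]
    intro g hg
    exact hle hg
  obtain ⟨χ, hχ⟩ := algHom_lift π hπ (MvPolynomial.aeval b) hker
  obtain ⟨s, hs, hneg⟩ := h χ
  have h1 := hb (c s) (Finset.mem_union_right _ (Finset.mem_image_of_mem _ (hS.mem_toFinset.2 hs)))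
  rw [hc] at h1
  have h2 := hχ (c s)
  rw [hc, MvPolynomial.aeval_eq_eval] at h2
  have h3 := hφ s (gen_mem_pre hs)
  rw [← h2, sign_neg hneg] at h1
  exact absurd (sign_eq_neg_one_iff.1 h1) (not_lt.2 h3)

lemma cs (L : B →ₗ[ℝ] ℝ) (hL : ∀ a, 0 ≤ L (a * a)) (a b : B) : L (a * b) ^ 2 ≤ L (a * a) * L (b * b) := by
  have : ∀ t : ℝ, 0 ≤ L (b * b) * (t * t) + 2 * L (a * b) * t + L (a * a) := by
    intro t
    have h := hL (a + t • b)
    have e : (a + t • b) * (a + t • b) = (t * t) • (b * b) + (2 * t) • (a * b) + a * a := by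
      simp only [Algebra.smul_def, map_mul, map_ofNat]; ring
    rw [e] at h
    simp only [map_add, map_smul, smul_eq_mul] at h
    linarith
  have := discrim_le_zero this
  unfold discrim at this
  nlinarith

lemma growth (v : ℕ → ℝ) (hv : ∀ n, 0 ≤ v n) (hlog : ∀ n, v (n + 1) ^ 2 ≤ v n * v (n + 2)) (c K : ℝ) (hc : 0 < c)
    (hb : ∀ n, v n ≤ K * c ^ n) : v 1 ≤ c * v 0 := by
  rcases (hv 0).eq_or_lt with h0 | h0
  · have := hlog 0
    rw [← h0, zero_mul] at this
    have : v 1 = 0 := by nlinarith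
    rw [this, ← h0]; simp
  by_contra hcon
  push Not at hcon
  set r := v 1 / v 0 with hr
  have hrc : c < r := by rw [hr, lt_div_iff₀ h0]; exact hcon
  have hr0 : 0 < r := hc.trans hrc
  have hpos : ∀ n, 0 < v n ∧ r * v n ≤ v (n + 1) := by
    intro n
    induction n with
    | zero => exact ⟨h0, by rw [hr, div_mul_cancel₀ _ h0.ne']⟩
    | succ n ih =>
      have h1 : 0 < v (n + 1) := lt_of_lt_of_le (mul_pos hr0 ih.1) ih.2
      refine ⟨h1, ?_⟩
      have h2 := hlog n
      have h3 : v n * (r * v (n + 1)) ≤ v n * v (n + 2) := by nlinarith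
      exact le_of_mul_le_mul_left h3 ih.1
  have hgeo : ∀ n, v 0 * r ^ n ≤ v n := by
    intro n
    induction n with
    | zero => simp
    | succ n ih =>
      have := (hpos n).2
      calc v 0 * r ^ (n + 1) = r * (v 0 * r ^ n) := by ring
        _ ≤ r * v n := by gcongr
        _ ≤ _ := this
  have hq : 1 < r / c := by rw [lt_div_iff₀ hc]; linarith
  obtain ⟨n, hn⟩ := pow_unbounded_of_one_lt (K / v 0) hq
  rw [div_pow, div_lt_div_iff₀ h0 (pow_pos hc n)] at hn
  have := hgeo n
  have := hb n
  linarith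

lemma bdd_sq [Algebra.FiniteType ℝ B] (S : Set B) (hS : S.Finite) (L : B →ₗ[ℝ] ℝ) (hL : ∀ t ∈ pre S, 0 ≤ L t)
    (h : B) (c : ℝ) (hc : 0 < c) (hh : ∀ χ : B →ₐ[ℝ] ℝ, (∀ s ∈ S, 0 ≤ χ s) → χ h ^ 2 < c) : L (h * h) ≤ c * L 1 := by
  have hm : (-1 : B) ∈ pre (insert (h * h - algebraMap ℝ B c) S) := by
    apply psatz _ (hS.insert _)
    intro χ
    by_contra! hcon
    have h1 := hh χ (fun s hs => hcon s (Or.inr hs))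
    have h2 := hcon _ (Or.inl rfl)
    simp only [map_sub, map_mul, AlgHom.commutes, Algebra.algebraMap_self, RingHom.id_apply] at h2
    nlinarith
  obtain ⟨q, hq, p, hp, e⟩ := pre_le_adj _ _ hm
  have hsq : ∀ a : B, a * a ∈ pre S := sq_mem_pre S
  have hpow : ∀ n, (h * h) ^ n ∈ pre S := fun n => (pre S).pow_mem (hsq h) n
  have key : ∀ n, L ((h * h) ^ n) + L (p * (h * h) ^ (n + 1)) ≤ c * L (p * (h * h) ^ n) := by
    intro n
    have e2 : c • (p * (h * h) ^ n) = (h * h) ^ n + q * (h * h) ^ n + p * (h * h) ^ (n + 1) := by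
      rw [Algebra.smul_def]
      have e3 : algebraMap ℝ B c * p = 1 + q + p * (h * h) := by linear_combination e
      rw [← mul_assoc, e3]; ring
    have := congrArg L e2
    simp only [map_add, map_smul, smul_eq_mul] at this
    have h3 := hL _ ((pre S).mul_mem hq (hpow n))
    linarith
  have hu : ∀ n, L (p * (h * h) ^ n) ≤ c ^ n * L p := by
    intro n
    induction n with
    | zero => simp
    | succ n ih =>
      have h1 := key n
      have h2 := hL _ (hpow n)
      calc _ ≤ c * L (p * (h * h) ^ n) := by linarith
        _ ≤ c * (c ^ n * L p) := by gcongr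
        _ = _ := by ring
  have := growth (fun n => L ((h * h) ^ n)) (fun n => hL _ (hpow n)) (fun n => by
      have := cs L (fun a => hL _ (hsq a)) (h ^ n) (h ^ (n + 2))
      convert this using 2
      · congr 2; ring
      · congr 2; ring
      · congr 1; ring) c (c * L p) hc (fun n => by
      have h1 := key n
      have h2 := hL _ ((pre S).mul_mem hp (hpow (n + 1)))
      have h3 := hu n
      have : c * L (p * (h * h) ^ n) ≤ c * (c ^ n * L p) := by gcongr
      change L ((h * h) ^ n) ≤ _
      nlinarith)
  simpa using this

/-- bounded nonnegative elements -/
theorem pos_bdd [Algebra.FiniteType ℝ B] (S : Set B) (hS : S.Finite) (L : B →ₗ[ℝ] ℝ) (hL : ∀ t ∈ pre S, 0 ≤ L t)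
    (h : B) (M : ℝ) (hh : ∀ χ : B →ₐ[ℝ] ℝ, (∀ s ∈ S, 0 ≤ χ s) → 0 ≤ χ h ∧ χ h ≤ M) : 0 ≤ L h := by
  wlog hM : 0 ≤ M generalizing M
  · exact this (max M 0) (fun χ hχ => ⟨(hh χ hχ).1, (hh χ hχ).2.trans (le_max_left _ _)⟩) (le_max_right _ _)
  have h1 : 0 ≤ L 1 := hL _ (pre S).one_mem
  have key : ∀ ε > 0, -(ε * L 1) ≤ L h := by
    intro ε hε
    have hb := bdd_sq S hS L hL (h - algebraMap ℝ B (M / 2)) ((M / 2 + ε) ^ 2) (by positivity) (by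
      intro χ hχ
      obtain ⟨h1, h2⟩ := hh χ hχ
      simp only [map_sub, AlgHom.commutes, Algebra.algebraMap_self, RingHom.id_apply]
      nlinarith)
    have hc := cs L (fun a => hL _ (sq_mem_pre S a)) (h - algebraMap ℝ B (M / 2)) 1
    simp only [mul_one] at hc
    have h2 : L (h - algebraMap ℝ B (M / 2)) = L h - M / 2 * L 1 := by
      rw [map_sub, Algebra.algebraMap_eq_smul_one, map_smul, smul_eq_mul]
    rw [h2] at hc
    have h3 : (L h - M / 2 * L 1) ^ 2 ≤ ((M / 2 + ε) * L 1) ^ 2 := by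
      calc _ ≤ _ := hc
        _ ≤ ((M / 2 + ε) ^ 2 * L 1) * L 1 := by gcongr
        _ = _ := by ring
    have h4 := abs_le_of_sq_le_sq h3 (by positivity)
    nlinarith [(abs_le.1 h4).1]
  rcases h1.eq_or_lt with h0 | h0
  · have := key 1 one_pos
    rw [← h0] at this; simpa using this
  · apply le_of_forall_pos_le_add
    intro ε hε
    have := key (ε / L 1) (by positivity)
    rw [div_mul_cancel₀ _ h0.ne'] at this
    linarith

end psatz
end RMP

namespace RMP
set_option linter.unusedSectionVars false

section reduce
variable {A : Type*} [CommRing A] [Algebra ℝ A]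

lemma exists_enum (A : Type*) [CommRing A] [Algebra ℝ A] [Algebra.FiniteType ℝ A] :
    ∃ e : ℕ → A, Submodule.span ℝ (Set.range e) = ⊤ ∧ ∃ k, e k = 1 := by
  obtain ⟨n, π, hπ⟩ := Algebra.FiniteType.iff_quotient_mvPolynomial''.1 (inferInstance : Algebra.FiniteType ℝ A)
  obtain ⟨g, hg⟩ := exists_surjective_nat (Fin n →₀ ℕ)
  refine ⟨fun k => π (MvPolynomial.monomial (g k) 1), ?_, ?_⟩
  · rw [eq_top_iff]
    rintro a -
    obtain ⟨p, rfl⟩ := hπ a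
    induction p using MvPolynomial.induction_on' with
    | monomial u c =>
      obtain ⟨k, rfl⟩ := hg u
      have : MvPolynomial.monomial (g k) c = c • MvPolynomial.monomial (g k) (1 : ℝ) := by
        rw [MvPolynomial.smul_monomial]; simp
      rw [this, map_smul]
      exact Submodule.smul_mem _ _ (Submodule.subset_span ⟨k, rfl⟩)
    | add p q hp hq => rw [map_add]; exact Submodule.add_mem _ hp hq
  · obtain ⟨k, hk⟩ := hg 0
    refine ⟨k, ?_⟩
    simp only [hk]
    exact map_one π

/-- multiplication twist of a functional -/
def tw (N : A →ₗ[ℝ] ℝ) (b : A) : A →ₗ[ℝ] ℝ := N.comp (LinearMap.mulLeft ℝ b)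
lemma tw_apply (N : A →ₗ[ℝ] ℝ) (b x : A) : tw N b x = N (b * x) := rfl

lemma tw_pos [Algebra.FiniteType ℝ A] (S : Set A) (hS : S.Finite) (N : A →ₗ[ℝ] ℝ) (hN : ∀ t ∈ pre S, 0 ≤ N t) (b : A) (M : ℝ)
    (hb : ∀ χ : A →ₐ[ℝ] ℝ, (∀ s ∈ S, 0 ≤ χ s) → 0 ≤ χ b ∧ χ b ≤ M) : ∀ t ∈ pre S, 0 ≤ tw N b t := by
  intro t ht
  have := pos_bdd S hS (tw N t) (fun u hu => hN _ ((pre S).mul_mem ht hu)) b M hb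
  rw [tw_apply] at this ⊢
  rwa [mul_comm]

lemma zero_of_sq (N : A →ₗ[ℝ] ℝ) (hN : ∀ a, 0 ≤ N (a * a)) (h1 : N 1 = 0) : N = 0 := by
  ext a
  have := cs N hN 1 a
  rw [one_mul, one_mul, h1, zero_mul] at this
  simp only [LinearMap.zero_apply]
  nlinarith

/-- the cap -/
def cap (S : Set A) (e : ℕ → A) (c : ℕ → ℝ) : Set (A → ℝ) :=
  {x | ∃ N : A →ₗ[ℝ] ℝ, (⇑N = x) ∧ (∀ t ∈ pre S, 0 ≤ N t) ∧ ∀ n, ∑ i ∈ Finset.range n, c i * N (e i * e i) ≤ 1}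

lemma cap_convex (S : Set A) (e : ℕ → A) (c : ℕ → ℝ) : Convex ℝ (cap S e c) := by
  rintro x ⟨N, rfl, h1, h2⟩ y ⟨N', rfl, h1', h2'⟩ a b ha hb hab
  refine ⟨a • N + b • N', rfl, fun t ht => ?_, fun n => ?_⟩
  · have := h1 t ht; have := h1' t ht
    simp only [LinearMap.add_apply, LinearMap.smul_apply, smul_eq_mul]; positivity
  · have := h2 n; have := h2' n
    simp only [LinearMap.add_apply, LinearMap.smul_apply, smul_eq_mul]
    have e1 : ∑ i ∈ Finset.range n, c i * (a * N (e i * e i) + b * N' (e i * e i)) = 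
      a * ∑ i ∈ Finset.range n, c i * N (e i * e i) + b * ∑ i ∈ Finset.range n, c i * N' (e i * e i) := by
      rw [Finset.mul_sum, Finset.mul_sum, ← Finset.sum_add_distrib]
      exact Finset.sum_congr rfl fun i _ => by ring
    rw [e1]
    nlinarith

lemma cap_closed (S : Set A) (e : ℕ → A) (c : ℕ → ℝ) : IsClosed (cap S e c) := by
  have : cap S e c = {x : A → ℝ | (∀ a b, x (a + b) = x a + x b) ∧ (∀ (r : ℝ) a, x (r • a) = r * x a) ∧
      (∀ t ∈ pre S, 0 ≤ x t) ∧ ∀ n, ∑ i ∈ Finset.range n, c i * x (e i * e i) ≤ 1} := by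
    ext x
    constructor
    · rintro ⟨N, rfl, h1, h2⟩
      exact ⟨N.map_add, fun r a => by simp, h1, h2⟩
    · rintro ⟨h1, h2, h3, h4⟩
      exact ⟨{ toFun := x, map_add' := h1, map_smul' := h2 }, rfl, h3, h4⟩
  rw [this]
  simp only [Set.setOf_and, Set.setOf_forall]
  refine IsClosed.inter ?_ (IsClosed.inter ?_ (IsClosed.inter ?_ ?_))
  · refine isClosed_iInter fun a => isClosed_iInter fun b => isClosed_eq (by fun_prop) (by fun_prop)
  · refine isClosed_iInter fun a => isClosed_iInter fun b => isClosed_eq (by fun_prop) (by fun_prop)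
  · refine isClosed_iInter fun a => isClosed_iInter fun b => isClosed_le (by fun_prop) (by fun_prop)
  · refine isClosed_iInter fun n => isClosed_le (by fun_prop) (by fun_prop)

lemma cap_term {S : Set A} {e : ℕ → A} {c : ℕ → ℝ} (hc : ∀ n, 0 < c n) {N : A →ₗ[ℝ] ℝ}
    (h1 : ∀ t ∈ pre S, 0 ≤ N t) (h2 : ∀ n, ∑ i ∈ Finset.range n, c i * N (e i * e i) ≤ 1) (n : ℕ) :
    N (e n * e n) ≤ 1 / c n := by
  have h3 : c n * N (e n * e n) ≤ ∑ i ∈ Finset.range (n + 1), c i * N (e i * e i) :=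
    Finset.single_le_sum (f := fun i => c i * N (e i * e i))
      (fun i _ => mul_nonneg (hc i).le (h1 _ (sq_mem_pre S _))) (by simp)
  rw [le_div_iff₀ (hc n)]
  linarith [h2 (n + 1)]

lemma cap_bdd (S : Set A) (e : ℕ → A) (c : ℕ → ℝ) (hc : ∀ n, 0 < c n) (he : Submodule.span ℝ (Set.range e) = ⊤)
    (k : ℕ) (hk : e k = 1) (a : A) : ∃ M : ℝ, ∀ x ∈ cap S e c, |x a| ≤ M := by
  have ha : a ∈ Submodule.span ℝ (Set.range e) := he ▸ Submodule.mem_top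
  induction ha using Submodule.span_induction with
  | mem a ha =>
    obtain ⟨n, rfl⟩ := ha
    refine ⟨1 / c k + 1 / c n, ?_⟩
    rintro x ⟨N, rfl, h1, h2⟩
    have t1 := cap_term hc h1 h2 k
    have t2 := cap_term hc h1 h2 n
    rw [hk, mul_one] at t1
    have p1 : 0 ≤ N 1 := h1 _ (pre S).one_mem
    have p2 : 0 ≤ N (e n * e n) := h1 _ (sq_mem_pre S _)
    have h3 := cs N (fun a => h1 _ (sq_mem_pre S a)) 1 (e n)
    rw [one_mul, one_mul] at h3
    apply abs_le_of_sq_le_sq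
    · nlinarith
    · linarith
  | zero => exact ⟨0, by rintro x ⟨N, rfl, h1, h2⟩; simp⟩
  | add a b _ _ ha hb =>
    obtain ⟨M, hM⟩ := ha
    obtain ⟨M', hM'⟩ := hb
    refine ⟨M + M', ?_⟩
    intro x hx
    have := hM x hx
    have := hM' x hx
    obtain ⟨N, rfl, h1, h2⟩ := hx
    rw [map_add]
    exact (abs_add_le _ _).trans (by linarith)
  | smul r a _ ha =>
    obtain ⟨M, hM⟩ := ha
    refine ⟨|r| * M, ?_⟩
    intro x hx
    have := hM x hx
    obtain ⟨N, rfl, h1, h2⟩ := hx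
    rw [map_smul, smul_eq_mul, abs_mul]
    gcongr

lemma cap_compact (S : Set A) (e : ℕ → A) (c : ℕ → ℝ) (hc : ∀ n, 0 < c n) (he : Submodule.span ℝ (Set.range e) = ⊤)
    (k : ℕ) (hk : e k = 1) : IsCompact (cap S e c) := by
  choose M hM using cap_bdd S e c hc he k hk
  apply (isCompact_univ_pi (fun a => isCompact_Icc (a := -M a) (b := M a))).of_isClosed_subset (cap_closed S e c)
  intro x hx a _
  exact abs_le.1 (hM a x hx)

/-- extreme points are multiplicative w.r.t. bounded elements -/
lemma extreme_mul [Algebra.FiniteType ℝ A] (S : Set A) (hS : S.Finite) (e : ℕ → A) (c : ℕ → ℝ) (hc : ∀ n, 0 < c n)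
    (he : Submodule.span ℝ (Set.range e) = ⊤) (N : A →ₗ[ℝ] ℝ) (hN : ⇑N ∈ (cap S e c).extremePoints ℝ) 
    (b : A) (hb : ∀ χ : A →ₐ[ℝ] ℝ, (∀ s ∈ S, 0 ≤ χ s) → 0 ≤ χ b ∧ χ b ≤ 1) : 
    ∃ r : ℝ, ∀ x, N (b * x) = r * N x := by
  obtain ⟨⟨N', hN', h1, h2⟩, hext⟩ := mem_extremePoints.1 hN
  obtain rfl : N' = N := DFunLike.coe_injective hN'
  have q1 := tw_pos S hS N' h1 b 1 hb
  have q2 := tw_pos S hS N' h1 (1 - b) 1 (by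
    intro χ hχ
    have := hb χ hχ
    simp only [map_sub, map_one]; constructor <;> linarith)
  set N1 := tw N' b with hN1
  set N2 := tw N' (1 - b) with hN2
  have hsum : ∀ x, N' x = N1 x + N2 x := by
    intro x; rw [hN1, hN2, tw_apply, tw_apply, ← map_add]; congr 1; ring
  have nn : ∀ (P : A →ₗ[ℝ] ℝ), (∀ t ∈ pre S, 0 ≤ P t) → ∀ n, 0 ≤ c n * P (e n * e n) := 
    fun P hP n => mul_nonneg (hc n).le (hP _ (sq_mem_pre S _))
  have sm : Summable (fun n => c n * N' (e n * e n)) := summable_of_sum_range_le (nn N' h1) h2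
  have sm1 : Summable (fun n => c n * N1 (e n * e n)) := Summable.of_nonneg_of_le (nn N1 q1) (fun n => by
    have := nn N2 q2 n; rw [hsum, mul_add]; linarith) sm
  have sm2 : Summable (fun n => c n * N2 (e n * e n)) := Summable.of_nonneg_of_le (nn N2 q2) (fun n => by
    have := nn N1 q1 n; rw [hsum, mul_add]; linarith) sm
  have hadd : ∑' n, c n * N' (e n * e n) = ∑' n, c n * N1 (e n * e n) + ∑' n, c n * N2 (e n * e n) := by
    rw [← sm1.tsum_add sm2]; congr 1; ext n; rw [hsum]; ring
  have le1 : ∑' n, c n * N' (e n * e n) ≤ 1 := Real.tsum_le_of_sum_range_le (nn N' h1) h2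
  have zz : ∀ (P : A →ₗ[ℝ] ℝ), (∀ t ∈ pre S, 0 ≤ P t) → Summable (fun n => c n * P (e n * e n)) → 
      ∑' n, c n * P (e n * e n) = 0 → ∀ x, P x = 0 := by
    intro P hP hs h0 x
    have h3 : ∀ n, P (e n * e n) = 0 := by
      intro n
      have := (hs.hasSum_iff.2 h0)
      rw [hasSum_zero_iff_of_nonneg (nn P hP)] at this
      have := congrFun this n
      simpa [(hc n).ne'] using this
    have hx : x ∈ Submodule.span ℝ (Set.range e) := he ▸ Submodule.mem_top
    induction hx using Submodule.span_induction with
    | mem a ha =>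
      obtain ⟨n, rfl⟩ := ha
      have h4 := cs P (fun a => hP _ (sq_mem_pre S a)) 1 (e n)
      rw [h3, one_mul, mul_zero] at h4
      nlinarith
    | zero => simp
    | add a b _ _ ha hb => rw [map_add, ha, hb, add_zero]
    | smul r a _ ha => rw [map_smul, ha, smul_zero]
  set α := ∑' n, c n * N1 (e n * e n) with hα
  set β := ∑' n, c n * N2 (e n * e n) with hβ
  have hα0 : 0 ≤ α := tsum_nonneg (nn N1 q1)
  have hβ0 : 0 ≤ β := tsum_nonneg (nn N2 q2)
  rcases hα0.eq_or_lt with hα1 | hα1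
  · refine ⟨0, fun x => ?_⟩
    have := zz N1 q1 sm1 hα1.symm x
    rw [hN1, tw_apply] at this
    rw [this, zero_mul]
  rcases hβ0.eq_or_lt with hβ1 | hβ1
  · refine ⟨1, fun x => ?_⟩
    have h3 := zz N2 q2 sm2 hβ1.symm x
    have h4 := hsum x
    rw [h3, hN1, tw_apply, add_zero] at h4
    rw [one_mul, h4]
  have memb : ∀ (P : A →ₗ[ℝ] ℝ), (∀ t ∈ pre S, 0 ≤ P t) → Summable (fun n => c n * P (e n * e n)) → 
      ∀ γ, ∑' n, c n * P (e n * e n) = γ → 0 < γ → ⇑(((α + β) / γ) • P) ∈ cap S e c := by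
    intro P hP hs γ hγ hγ0
    refine ⟨_, rfl, fun t ht => ?_, fun n => ?_⟩
    · have := hP t ht
      simp only [LinearMap.smul_apply, smul_eq_mul]; positivity
    · have h3 := hs.sum_le_tsum (Finset.range n) (fun i _ => nn P hP i)
      rw [hγ] at h3
      calc _ = (α + β) / γ * ∑ i ∈ Finset.range n, c i * P (e i * e i) := by
            rw [Finset.mul_sum]; apply Finset.sum_congr rfl; intro i _
            simp only [LinearMap.smul_apply, smul_eq_mul]; ring
        _ ≤ (α + β) / γ * γ := by gcongr
        _ = α + β := by field_simp
        _ ≤ 1 := by linarith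
  have m1 := memb N1 q1 sm1 α rfl hα1
  have m2 := memb N2 q2 sm2 β rfl hβ1
  have hab : 0 < α + β := by positivity
  have hseg : ⇑N' ∈ openSegment ℝ (⇑(((α + β) / α) • N1)) (⇑(((α + β) / β) • N2)) := by
    refine ⟨α / (α + β), β / (α + β), by positivity, by positivity, by field_simp, ?_⟩
    ext x
    simp only [Pi.add_apply, Pi.smul_apply, LinearMap.smul_apply, smul_eq_mul]
    rw [hsum x]
    field_simp
  have := (hext _ m1 _ m2 hseg).1
  refine ⟨α / (α + β), fun x => ?_⟩
  have h3 := congrFun this x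
  simp only [LinearMap.smul_apply, smul_eq_mul, hN1, tw_apply] at h3
  rw [← h3]
  field_simp

/-- elements of an enlarged preordering -/
lemma pre_union_ideal (S : Set A) (I : Ideal A) (G : Set A) (hG : G ⊆ I) (x : A) (hx : x ∈ pre (S ∪ G)) : 
    ∃ t ∈ pre S, x - t ∈ I := by
  unfold pre at hx
  induction hx using Subsemiring.closure_induction with
  | mem x h =>
    rcases h with (h | h) | ⟨a, rfl⟩
    · exact ⟨x, gen_mem_pre h, by simp⟩
    · exact ⟨0, (pre S).zero_mem, by simpa using hG h⟩
    · exact ⟨a * a, sq_mem_pre S a, by simp⟩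
  | zero => exact ⟨0, (pre S).zero_mem, by simp⟩
  | one => exact ⟨1, (pre S).one_mem, by simp⟩
  | add x y _ _ hx hy =>
    obtain ⟨t, ht, h⟩ := hx
    obtain ⟨t', ht', h'⟩ := hy
    exact ⟨t + t', (pre S).add_mem ht ht', by convert I.add_mem h h' using 1; ring⟩
  | mul x y _ _ hx hy =>
    obtain ⟨t, ht, h⟩ := hx
    obtain ⟨t', ht', h'⟩ := hy
    refine ⟨t * t', (pre S).mul_mem ht ht', ?_⟩
    convert I.add_mem (I.mul_mem_right y h) (I.mul_mem_left t h') using 1; ring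

/-- Reduction to fibres. -/
theorem reduce [Algebra.FiniteType ℝ A] (S : Set A) (hS : S.Finite) (L : A →ₗ[ℝ] ℝ) (hL : ∀ t ∈ pre S, 0 ≤ L t)
    {ι : Type*} [Finite ι] (h : ι → A) (C : ℝ) (hC : ∀ χ : A →ₐ[ℝ] ℝ, (∀ s ∈ S, 0 ≤ χ s) → ∀ j, |χ (h j)| ≤ C)
    (a : A)
    (fib : ∀ lam : ι → ℝ, (∃ χ : A →ₐ[ℝ] ℝ, (∀ s ∈ S, 0 ≤ χ s) ∧ ∀ j, χ (h j) = lam j) → 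
      ∀ N : A →ₗ[ℝ] ℝ, (∀ t ∈ pre S, 0 ≤ N t) → 
        (∀ x ∈ Ideal.span (Set.range fun j => h j - algebraMap ℝ A (lam j)), N x = 0) → 0 ≤ N a) : 0 ≤ L a := by
  obtain ⟨e, he, k, hk⟩ := exists_enum A
  let c : ℕ → ℝ := fun n => (1 / 2) ^ (n + 1) / (1 + L (e n * e n))
  have hLn : ∀ n, 0 ≤ L (e n * e n) := fun n => hL _ (sq_mem_pre S _)
  have hc : ∀ n, 0 < c n := fun n => by have := hLn n; positivity
  have hLc : ⇑L ∈ cap S e c := by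
    refine ⟨L, rfl, hL, fun n => ?_⟩
    calc ∑ i ∈ Finset.range n, c i * L (e i * e i) ≤ ∑ i ∈ Finset.range n, (1 / 2 : ℝ) ^ (i + 1) := by
          apply Finset.sum_le_sum
          intro i _
          have := hLn i
          simp only [c]
          rw [div_mul_eq_mul_div, div_le_iff₀ (by positivity)]
          gcongr
          linarith
      _ ≤ 1 := by
          have : ∀ n : ℕ, ∑ i ∈ Finset.range n, (1 / 2 : ℝ) ^ (i + 1) = 1 - (1 / 2) ^ n := by
            intro n
            induction n with
            | zero => simp
            | succ n ih => rw [Finset.sum_range_succ, ih]; ring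
          rw [this]
          have : (0 : ℝ) ≤ (1 / 2) ^ n := by positivity
          linarith
  rw [← closure_convexHull_extremePoints (cap_compact S e c hc he k hk) (cap_convex S e c)] at hLc
  have hcl : IsClosed {x : A → ℝ | 0 ≤ x a} := isClosed_le (by fun_prop) (by fun_prop)
  have hcv : Convex ℝ {x : A → ℝ | 0 ≤ x a} := by
    intro x hx y hy s t hs ht _
    simp only [Set.mem_setOf_eq, Pi.add_apply, Pi.smul_apply, smul_eq_mul] at hx hy ⊢
    positivity
  refine closure_minimal (convexHull_min ?_ hcv) hcl hLc
  intro x hx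
  obtain ⟨N, rfl, h1, h2⟩ := hx.1
  change 0 ≤ N a
  wlog hC0 : 0 < C generalizing C
  · exact this (|C| + 1) (fun χ hχ j => (hC χ hχ j).trans (by have := le_abs_self C; linarith)) (by positivity)
  have hl : ∀ j, ∃ r : ℝ, ∀ x, N ((h j - algebraMap ℝ A r) * x) = 0 := by
    intro j
    obtain ⟨r, hr⟩ := extreme_mul S hS e c hc he N hx ((1 / (2 * C)) • (h j + algebraMap ℝ A C)) (by
      intro χ hχ
      have := abs_le.1 (hC χ hχ j)
      simp only [map_smul, map_add, AlgHom.commutes, Algebra.algebraMap_self, RingHom.id_apply, smul_eq_mul]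
      constructor
      · apply mul_nonneg (by positivity); linarith
      · rw [div_mul_eq_mul_div, div_le_iff₀ (by positivity)]; linarith)
    refine ⟨2 * C * r - C, fun x => ?_⟩
    have h3 := hr x
    rw [smul_mul_assoc, map_smul, smul_eq_mul, div_mul_eq_mul_div, div_eq_iff (by positivity), one_mul, add_mul, map_add,
      ← Algebra.smul_def, map_smul, smul_eq_mul] at h3
    rw [sub_mul, map_sub, ← Algebra.smul_def, map_smul, smul_eq_mul]
    linarith
  choose lam hlam using hl
  have hI : ∀ x ∈ Ideal.span (Set.range fun j => h j - algebraMap ℝ A (lam j)), N x = 0 := by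
    intro x hx
    induction hx using Submodule.span_induction with
    | mem x hx => obtain ⟨j, rfl⟩ := hx; simpa using hlam j 1
    | zero => simp
    | add x y _ _ hx hy => rw [map_add, hx, hy, add_zero]
    | smul r x hx _ =>
      obtain ⟨g, hg⟩ := Finsupp.mem_span_range_iff_exists_finsupp.1 hx
      rw [← hg, Finsupp.sum, Finset.smul_sum, map_sum]
      apply Finset.sum_eq_zero
      intro j _
      rw [smul_smul, smul_eq_mul, mul_comm]
      exact hlam j _
  by_cases hex : ∃ χ : A →ₐ[ℝ] ℝ, (∀ s ∈ S, 0 ≤ χ s) ∧ ∀ j, χ (h j) = lam j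
  · exact fib lam hex N h1 hI
  · let G : Set A := (Set.range fun j => h j - algebraMap ℝ A (lam j)) ∪ (Set.range fun j => -(h j - algebraMap ℝ A (lam j)))
    have hm : (-1 : A) ∈ pre (S ∪ G) := by
      apply psatz _ (hS.union ((Set.finite_range _).union (Set.finite_range _)))
      intro χ
      by_contra! hcon
      apply hex
      refine ⟨χ, fun s hs => hcon s (Or.inl hs), fun j => ?_⟩
      have a1 := hcon _ (Or.inr (Or.inl ⟨j, rfl⟩))
      have a2 := hcon _ (Or.inr (Or.inr ⟨j, rfl⟩))
      simp only [map_sub, map_neg, AlgHom.commutes, Algebra.algebraMap_self, RingHom.id_apply] at a1 a2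
      linarith
    obtain ⟨t, ht, hti⟩ := pre_union_ideal S (Ideal.span (Set.range fun j => h j - algebraMap ℝ A (lam j))) G (by
      rintro x (⟨j, rfl⟩ | ⟨j, rfl⟩)
      · exact Ideal.subset_span ⟨j, rfl⟩
      · exact neg_mem (Ideal.subset_span ⟨j, rfl⟩)) _ hm
    have a1 := hI _ hti
    rw [map_sub, map_neg] at a1
    have a2 := h1 t ht
    have a3 := h1 1 (pre S).one_mem
    have := zero_of_sq N (fun a => h1 _ (sq_mem_pre S a)) (by linarith)
    rw [this]; simp
end reduce
end RMP

namespace RMP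
set_option linter.unusedSectionVars false
open scoped TensorProduct

section sos
open Polynomial

lemma sos_univ : ∀ n : ℕ, ∀ p : ℝ[X], p.natDegree ≤ n → (∀ x, 0 ≤ p.eval x) → p ∈ pre (∅ : Set ℝ[X]) := by
  have hC : ∀ c : ℝ, 0 ≤ c → (C c : ℝ[X]) ∈ pre (∅ : Set ℝ[X]) := by
    intro c hc
    rw [← Real.mul_self_sqrt hc, C_mul]
    exact sq_mem_pre _ _
  intro n
  induction n with
  | zero =>
    intro p hp h
    rw [eq_C_of_natDegree_le_zero hp] at h ⊢
    exact hC _ (by simpa using h 0)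
  | succ n ih =>
    intro p hp h
    by_cases hd : p.natDegree ≤ n
    · exact ih p hd h
    have hdeg : 0 < p.degree := natDegree_pos_iff_degree_pos.1 (by omega)
    have ht : Filter.Tendsto (fun x : ℝ => p.eval x) (Filter.cocompact ℝ) Filter.atTop := by
      have := p.tendsto_norm_atTop hdeg (tendsto_norm_cocompact_atTop (E := ℝ))
      refine this.congr fun x => ?_
      rw [Real.norm_of_nonneg (h x)]
    obtain ⟨r, hr⟩ := p.continuous.exists_forall_le ht
    have hder : p.derivative.eval r = 0 := by
      have hl : IsLocalMin (fun x => p.eval x) r := Filter.Eventually.of_forall hr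
      have := hl.deriv_eq_zero
      simpa using this
    set m := p.eval r with hm
    have hne : p - C m ≠ 0 := by
      intro h0
      have : p = C m := sub_eq_zero.1 h0
      rw [this] at hd; simp at hd
    have hmult : 1 < (p - C m).rootMultiplicity r := by
      rw [one_lt_rootMultiplicity_iff_isRoot hne]
      constructor
      · simp [hm]
      · simpa using hder
    have hdvd : (X - C r) ^ 2 ∣ p - C m := (pow_dvd_pow _ hmult).trans (pow_rootMultiplicity_dvd _ _)
    obtain ⟨q, hq⟩ := hdvd
    have hq0 : q ≠ 0 := by rintro rfl; simp at hq; exact hne hq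
    have hqd : q.natDegree ≤ n := by
      have h1 : (p - C m).natDegree = p.natDegree := natDegree_sub_C
      rw [hq, natDegree_mul (pow_ne_zero _ (X_sub_C_ne_zero r)) hq0, natDegree_pow, natDegree_X_sub_C] at h1
      omega
    have hqp : ∀ x, 0 ≤ q.eval x := by
      have h1 : ∀ x, x ≠ r → 0 ≤ q.eval x := by
        intro x hx
        have h2 := congrArg (eval x) hq
        simp only [eval_sub, eval_C, eval_mul, eval_pow, eval_X] at h2
        have h3 := hr x
        have h4 : 0 < (x - r) ^ 2 := by have := sub_ne_zero.2 hx; positivity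
        by_contra hc
        have := mul_neg_of_pos_of_neg h4 (not_le.1 hc)
        linarith
      intro x
      have hcl : IsClosed {x : ℝ | 0 ≤ q.eval x} := isClosed_le continuous_const q.continuous
      have hsub : closure ({r}ᶜ : Set ℝ) ⊆ {x : ℝ | 0 ≤ q.eval x} := closure_minimal (fun x hx => h1 x hx) hcl
      rw [(dense_compl_singleton r).closure_eq] at hsub
      exact hsub (Set.mem_univ x)
    have : p = C m + (X - C r) * (X - C r) * q := by
      rw [← sq, ← hq]; ring
    rw [this]
    exact add_mem (hC m (h r)) (mul_mem (sq_mem_pre _ _) (ih q hqd hqp))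
end sos

section fibre

lemma map_pre {A B : Type*} [CommRing A] [CommRing B] (f : A →+* B) {x : A} (hx : x ∈ pre (∅ : Set A)) :
    f x ∈ pre (∅ : Set B) := by
  unfold pre at hx
  induction hx using Subsemiring.closure_induction with
  | mem x h =>
    rcases h with h | ⟨a, rfl⟩
    · exact absurd h (by simp)
    · simp only [map_mul]; exact sq_mem_pre _ _
  | zero => simp
  | one => simp
  | add x y _ _ hx hy => rw [map_add]; exact add_mem hx hy
  | mul x y _ _ hx hy => rw [map_mul]; exact mul_mem hx hy

lemma lift_pre {A B : Type*} [CommRing A] [CommRing B] (f : A →+* B) (hf : Function.Surjective f) {x : B}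
    (hx : x ∈ pre (∅ : Set B)) : ∃ y ∈ pre (∅ : Set A), f y = x := by
  unfold pre at hx
  induction hx using Subsemiring.closure_induction with
  | mem x h =>
    rcases h with h | ⟨a, rfl⟩
    · exact absurd h (by simp)
    · obtain ⟨a, rfl⟩ := hf a
      exact ⟨a * a, sq_mem_pre _ _, by simp⟩
  | zero => exact ⟨0, zero_mem _, by simp⟩
  | one => exact ⟨1, one_mem _, by simp⟩
  | add x y _ _ hx hy =>
    obtain ⟨a, ha, rfl⟩ := hx
    obtain ⟨b, hb, rfl⟩ := hy
    exact ⟨a + b, add_mem ha hb, by simp⟩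
  | mul x y _ _ hx hy =>
    obtain ⟨a, ha, rfl⟩ := hx
    obtain ⟨b, hb, rfl⟩ := hy
    exact ⟨a * b, mul_mem ha hb, by simp⟩

lemma descend {A B : Type*} [CommRing A] [CommRing B] [Algebra ℝ A] [Algebra ℝ B] (π : A →ₐ[ℝ] B)
    (hπ : Function.Surjective π) (N : A →ₗ[ℝ] ℝ) (hN : ∀ t ∈ pre (∅ : Set A), 0 ≤ N t)
    (hk : ∀ x, π x = 0 → N x = 0) : 
    ∃ N' : B →ₗ[ℝ] ℝ, (∀ x, N' (π x) = N x) ∧ ∀ t ∈ pre (∅ : Set B), 0 ≤ N' t := by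
  let s := Function.surjInv hπ
  have hs : ∀ b, π (s b) = b := Function.surjInv_eq hπ
  have hk2 : ∀ x y, π x = π y → N x = N y := by
    intro x y h
    have := hk (x - y) (by rw [map_sub, h, sub_self])
    rw [map_sub] at this; linarith
  let N' : B →ₗ[ℝ] ℝ := {
    toFun := fun b => N (s b)
    map_add' := fun x y => by rw [← map_add]; apply hk2; rw [map_add, hs, hs, hs]
    map_smul' := fun r x => by
      rw [RingHom.id_apply, ← map_smul]; apply hk2; rw [map_smul, hs, hs] }
  have h1 : ∀ x, N' (π x) = N x := fun x => hk2 _ _ (hs _)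
  refine ⟨N', h1, fun t ht => ?_⟩
  obtain ⟨y, hy, rfl⟩ := lift_pre π.toRingHom hπ ht
  exact (h1 y).symm ▸ hN y hy

lemma toAlg {B : Type*} [CommRing B] [Algebra ℝ B] (f : B →+* ℝ) : ∃ χ : B →ₐ[ℝ] ℝ, ∀ x, χ x = f x := by
  refine ⟨{ f with commutes' := fun r => ?_ }, fun x => rfl⟩
  have : f.comp (algebraMap ℝ B) = RingHom.id ℝ := Subsingleton.elim _ _
  exact congrArg (fun g : ℝ →+* ℝ => g r) this

/-- quotients of localizations of `ℝ[y]` -/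
lemma curve {B : Type*} [CommRing B] [Algebra ℝ B] [Algebra.FiniteType ℝ B] (ℰ : Submonoid (Polynomial ℝ)) (hℰ : ℰ.FG)
    (ψ : Localization ℰ →ₐ[ℝ] B) (hψ : Function.Surjective ψ) (N : B →ₗ[ℝ] ℝ) (hN : ∀ t ∈ pre (∅ : Set B), 0 ≤ N t)
    (a : B) (ha : ∀ χ : B →ₐ[ℝ] ℝ, 0 ≤ χ a) : 0 ≤ N a := by
  obtain ⟨z, rfl⟩ := hψ a
  obtain ⟨⟨u, v⟩, huv⟩ := IsLocalization.surj ℰ z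
  simp only at huv
  by_cases hker : ∀ x, ψ x = 0 → x = 0
  · obtain ⟨F, rfl⟩ := hℰ
    let g : Polynomial ℝ := ∏ f ∈ F, f
    have hg : g ∈ Submonoid.closure (F : Set (Polynomial ℝ)) := Submonoid.prod_mem _ fun f hf => Submonoid.subset_closure hf
    have hgt : ∀ t, g.eval t ≠ 0 → ∀ q ∈ Submonoid.closure (F : Set (Polynomial ℝ)), q.eval t ≠ 0 := by
      intro t ht q hq
      induction hq using Submonoid.closure_induction with
      | mem x hx =>
        intro h0
        apply ht
        simp only [g]
        rw [Polynomial.eval_prod]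
        exact Finset.prod_eq_zero hx h0
      | one => simp
      | mul x y _ _ hx hy => rw [Polynomial.eval_mul]; exact mul_ne_zero hx hy
    have hnn : ∀ t, 0 ≤ (u * v * (g * g)).eval t := by
      intro t
      by_cases ht : g.eval t = 0
      · simp [ht]
      have hu : ∀ y : Submonoid.closure (F : Set (Polynomial ℝ)), IsUnit (Polynomial.evalRingHom t (y : Polynomial ℝ)) :=
        fun y => isUnit_iff_ne_zero.2 (hgt t ht y y.2)
      obtain ⟨χ0, hχ0⟩ := toAlg (IsLocalization.lift hu : Localization (Submonoid.closure (F : Set (Polynomial ℝ))) →+* ℝ)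
      obtain ⟨χ, hχ⟩ := algHom_lift ψ hψ χ0 (fun x hx => by rw [hker x hx, map_zero])
      have h1 := ha χ
      rw [hχ] at h1
      have h2 := congrArg χ0 huv
      rw [map_mul, hχ0 (algebraMap _ _ _), hχ0 (algebraMap _ _ _), IsLocalization.lift_eq, IsLocalization.lift_eq] at h2
      simp only [Polynomial.coe_evalRingHom] at h2
      simp only [Polynomial.eval_mul]
      rw [← h2]
      have : χ0 z * Polynomial.eval t v * Polynomial.eval t v * (Polynomial.eval t g * Polynomial.eval t g) =
        χ0 z * (Polynomial.eval t v * Polynomial.eval t g) ^ 2 := by ring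
      rw [this]; positivity
    have hm := map_pre (algebraMap (Polynomial ℝ) (Localization (Submonoid.closure (F : Set (Polynomial ℝ))))) 
      (sos_univ _ _ le_rfl hnn)
    let w : Localization (Submonoid.closure (F : Set (Polynomial ℝ))) := IsLocalization.mk' _ 1 (v * ⟨g, hg⟩)
    have hw : w * (algebraMap _ _ (v : Polynomial ℝ) * algebraMap _ _ g) = 1 := by
      have := IsLocalization.mk'_spec (Localization (Submonoid.closure (F : Set (Polynomial ℝ)))) 1 (v * ⟨g, hg⟩)
      simpa [w] using this
    have hz : z = algebraMap _ _ (u * v * (g * g)) * (w * w) := by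
      simp only [map_mul]
      rw [← huv]
      linear_combination (-z) * (w * (algebraMap _ _ (v : Polynomial ℝ) * algebraMap _ _ g) + 1) * hw
    rw [hz]
    exact hN _ (map_pre ψ.toRingHom (mul_mem hm (sq_mem_pre _ _)))
  · push Not at hker
    obtain ⟨x, hx, hx0⟩ := hker
    obtain ⟨⟨p, q⟩, hpq⟩ := IsLocalization.surj ℰ x
    simp only at hpq
    have hp0 : p ≠ 0 := by
      rintro rfl
      apply hx0
      rw [map_zero] at hpq
      exact (IsLocalization.map_units (Localization ℰ) q).mul_left_eq_zero.1 hpq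
    apply pos_bdd ∅ Set.finite_empty N hN _ (∑ t ∈ p.roots.toFinset, |u.eval t / (v : Polynomial ℝ).eval t|)
    intro χ _
    refine ⟨ha χ, ?_⟩
    let f : Polynomial ℝ →+* ℝ := χ.toRingHom.comp (ψ.toRingHom.comp (algebraMap (Polynomial ℝ) (Localization ℰ)))
    obtain ⟨f', hf'⟩ := toAlg f
    have hf : ∀ s : Polynomial ℝ, χ (ψ (algebraMap _ _ s)) = s.eval (f' Polynomial.X) := by
      intro s
      have h1 : f' s = s.eval (f' Polynomial.X) := by
        have : f' = Polynomial.aeval (f' Polynomial.X) := by ext; simp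
        conv_lhs => rw [this]
        rw [Polynomial.coe_aeval_eq_eval]
      rw [← h1, hf']; rfl
    set t := f' Polynomial.X with ht
    have hroot : t ∈ p.roots.toFinset := by
      rw [Multiset.mem_toFinset, Polynomial.mem_roots hp0, Polynomial.IsRoot, ← hf, ← hpq, map_mul, hx, zero_mul, map_zero]
    have hv : (v : Polynomial ℝ).eval t ≠ 0 := by
      rw [← hf]
      have := ((IsLocalization.map_units (Localization ℰ) v).map ψ).map χ
      exact this.ne_zero
    have hval : χ (ψ z) = u.eval t / (v : Polynomial ℝ).eval t := by
      rw [eq_div_iff hv, ← hf, ← hf, ← map_mul, ← map_mul, huv]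
    rw [hval]
    exact (le_abs_self _).trans (Finset.single_le_sum (f := fun t => |u.eval t / (v : Polynomial ℝ).eval t|) (fun i _ => abs_nonneg _) hroot)

lemma findim_bdd {C : Type*} [CommRing C] [Algebra ℝ C] [FiniteDimensional ℝ C] (c : C) :
    ∃ M : ℝ, ∀ χ : C →ₐ[ℝ] ℝ, |χ c| ≤ M := by
  have hintg : IsIntegral ℝ c := Algebra.IsIntegral.isIntegral c
  have h0 : minpoly ℝ c ≠ 0 := minpoly.ne_zero hintg
  refine ⟨∑ t ∈ (minpoly ℝ c).roots.toFinset, |t|, fun χ => ?_⟩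
  have hroot : χ c ∈ (minpoly ℝ c).roots.toFinset := by
    rw [Multiset.mem_toFinset, Polynomial.mem_roots h0, Polynomial.IsRoot, ← Polynomial.coe_aeval_eq_eval,
      Polynomial.aeval_algHom_apply, minpoly.aeval, map_zero]
  exact Finset.single_le_sum (f := fun t : ℝ => |t|) (fun i _ => abs_nonneg _) hroot

theorem fibre {A : Type*} [CommRing A] [Algebra ℝ A] [Algebra.FiniteType ℝ A] (I : Ideal A)
    (ℰ : Submonoid (Polynomial ℝ)) (hℰ : ℰ.FG) {C : Type*} [CommRing C] [Algebra ℝ C] [FiniteDimensional ℝ C]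
    (ρ : TensorProduct ℝ (Localization ℰ) C →ₐ[ℝ] A ⧸ I) (hρ : Function.Surjective ρ) (N : A →ₗ[ℝ] ℝ)
    (hN : ∀ t ∈ pre (∅ : Set A), 0 ≤ N t) (hI : ∀ x ∈ I, N x = 0) (a : A) (ha : ∀ χ : A →ₐ[ℝ] ℝ, 0 ≤ χ a) :
    0 ≤ N a := by
  obtain ⟨N1, hN1, hN1p⟩ := descend (Ideal.Quotient.mkₐ ℝ I) (Ideal.Quotient.mkₐ_surjective ℝ I) N hN
    (fun x hx => hI x (Ideal.Quotient.eq_zero_iff_mem.1 hx))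
  haveI : Algebra.FiniteType ℝ (A ⧸ I) := Algebra.FiniteType.of_surjective (Ideal.Quotient.mkₐ ℝ I) (Ideal.Quotient.mkₐ_surjective ℝ I)
  rw [← hN1]
  let b := Module.finBasis ℝ C
  choose M hM using fun c : C => findim_bdd c
  let inr : C →ₐ[ℝ] TensorProduct ℝ (Localization ℰ) C := Algebra.TensorProduct.includeRight
  let inl : Localization ℰ →ₐ[ℝ] TensorProduct ℝ (Localization ℰ) C := Algebra.TensorProduct.includeLeft
  apply reduce ∅ Set.finite_empty N1 hN1p (fun j => ρ (inr (b j))) (∑ j, |M (b j)|)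
  · intro χ _ j
    refine (hM (b j) (χ.comp (ρ.comp inr))).trans ((le_abs_self _).trans ?_)
    exact Finset.single_le_sum (f := fun j => |M (b j)|) (fun i _ => abs_nonneg _) (Finset.mem_univ j)
  · intro lam _ N2 hN2 hN2I
    set I' := Ideal.span (Set.range fun j => ρ (inr (b j)) - algebraMap ℝ (A ⧸ I) (lam j)) with hI'
    obtain ⟨N3, hN3, hN3p⟩ := descend (Ideal.Quotient.mkₐ ℝ I') (Ideal.Quotient.mkₐ_surjective ℝ I') N2 hN2
      (fun x hx => hN2I x (Ideal.Quotient.eq_zero_iff_mem.1 hx))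
    haveI : Algebra.FiniteType ℝ ((A ⧸ I) ⧸ I') :=
      Algebra.FiniteType.of_surjective (Ideal.Quotient.mkₐ ℝ I') (Ideal.Quotient.mkₐ_surjective ℝ I')
    rw [← hN3]
    let θ : TensorProduct ℝ (Localization ℰ) C →ₐ[ℝ] (A ⧸ I) ⧸ I' := (Ideal.Quotient.mkₐ ℝ I').comp ρ
    have hθ : Function.Surjective θ := (Ideal.Quotient.mkₐ_surjective ℝ I').comp hρ
    have hψ : Function.Surjective (θ.comp inl) := by
      have hr : ∀ c, θ (inr c) ∈ (θ.comp inl).range := by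
        intro c
        have hc : c ∈ Submodule.span ℝ (Set.range b) := b.span_eq ▸ Submodule.mem_top
        induction hc using Submodule.span_induction with
        | mem x hx =>
          obtain ⟨j, rfl⟩ := hx
          have : θ (inr (b j)) = algebraMap ℝ _ (lam j) := by
            have h1 : (Ideal.Quotient.mkₐ ℝ I') (ρ (inr (b j)) - algebraMap ℝ (A ⧸ I) (lam j)) = 0 :=
              Ideal.Quotient.eq_zero_iff_mem.2 (Ideal.subset_span ⟨j, rfl⟩)
            rw [map_sub, AlgHom.commutes] at h1
            exact sub_eq_zero.1 h1
          rw [this]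
          exact Subalgebra.algebraMap_mem _ _
        | zero => simp only [map_zero]; exact zero_mem _
        | add x y _ _ hx hy => rw [map_add, map_add]; exact add_mem hx hy
        | smul r x _ hx => rw [map_smul, map_smul]; exact Subalgebra.smul_mem _ hx r
      intro y
      obtain ⟨z, rfl⟩ := hθ y
      change θ z ∈ (θ.comp inl).range
      induction z using TensorProduct.induction_on with
      | zero => rw [map_zero]; exact zero_mem _
      | tmul e c =>
        have : e ⊗ₜ[ℝ] c = inl e * inr c := by simp [inl, inr]
        rw [this, map_mul]
        exact mul_mem ⟨e, rfl⟩ (hr c)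
      | add x y hx hy => rw [map_add]; exact add_mem hx hy
    apply curve ℰ hℰ (θ.comp inl) hψ N3 hN3p
    intro χ
    exact ha (χ.comp ((Ideal.Quotient.mkₐ ℝ I').comp (Ideal.Quotient.mkₐ ℝ I)))
end fibre
end RMP

namespace RMP
set_option linter.unusedSectionVars false

section pos
open MvPolynomial

lemma char_point {d : ℕ} (𝔻 : Submonoid (MvPolynomial (Fin d) ℝ)) (χ : Localization 𝔻 →ₐ[ℝ] ℝ) :
    ∃ (t : Fin d → ℝ) (ht : ∀ q ∈ 𝔻, MvPolynomial.eval t q ≠ 0),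
      (∀ p : MvPolynomial (Fin d) ℝ, χ (algebraMap _ _ p) = MvPolynomial.eval t p) ∧
      ∀ x, χ x = evalLoc 𝔻 t ht x := by
  set t : Fin d → ℝ := fun i => χ (algebraMap (MvPolynomial (Fin d) ℝ) _ (X i)) with htdef
  have h1 : ∀ p : MvPolynomial (Fin d) ℝ, χ (algebraMap _ _ p) = MvPolynomial.eval t p := by
    intro p
    have : (χ.toRingHom.comp (algebraMap (MvPolynomial (Fin d) ℝ) (Localization 𝔻))) =
        MvPolynomial.eval t := by
      apply MvPolynomial.ringHom_ext
      · intro r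
        have : algebraMap (MvPolynomial (Fin d) ℝ) (Localization 𝔻) (C r) =
            algebraMap ℝ (Localization 𝔻) r := by
          rw [IsScalarTower.algebraMap_apply ℝ (MvPolynomial (Fin d) ℝ) (Localization 𝔻)]
          rfl
        simp [this]
      · intro i
        simp [htdef]
    exact congrArg (fun g => g p) this
  have ht : ∀ q ∈ 𝔻, MvPolynomial.eval t q ≠ 0 := by
    intro q hq
    rw [← h1]
    have := (IsLocalization.map_units (Localization 𝔻) ⟨q, hq⟩).map χ
    exact this.ne_zero
  refine ⟨t, ht, h1, ?_⟩
  intro x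
  have : χ.toRingHom = evalLoc 𝔻 t ht := by
    apply IsLocalization.ringHom_ext 𝔻
    refine RingHom.ext fun p => ?_
    simp [evalLoc, h1]
  exact congrArg (fun g => g x) this

lemma evalLoc_algebraMap {d : ℕ} (𝔻 : Submonoid (MvPolynomial (Fin d) ℝ)) (t : Fin d → ℝ)
    (ht : ∀ q ∈ 𝔻, MvPolynomial.eval t q ≠ 0) (p : MvPolynomial (Fin d) ℝ) :
    evalLoc 𝔻 t ht (algebraMap _ _ p) = MvPolynomial.eval t p := by
  simp [evalLoc]

lemma pre_isIn {A : Type*} [CommRing A] (S : Set A) : ∀ x ∈ pre S, IsInPreordering S x := by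
  intro x hx
  unfold pre at hx
  induction hx using Subsemiring.closure_induction with
  | mem x hx =>
    rcases hx with hx | ⟨a, rfl⟩
    · exact .gen hx
    · have := IsInPreordering.sq (S := S) a
      rwa [pow_two] at this
  | zero => simpa using IsInPreordering.sq (S := S) 0
  | one => simpa using IsInPreordering.sq (S := S) 1
  | add x y _ _ hx hy => exact .add hx hy
  | mul x y _ _ hx hy => exact .mul hx hy

theorem positivity_main {d : ℕ}
    (𝔻₀ : Submonoid (MvPolynomial (Fin d) ℝ))
    {k : ℕ} (f : Fin k → MvPolynomial (Fin d) ℝ)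
    (hyp : ∀ 𝔻 : Submonoid (MvPolynomial (Fin d) ℝ), 𝔻 ≤ 𝔻₀ → 𝔻.FG →
      ∃ (m : ℕ) (h : Fin m → Localization 𝔻),
        (∃ C : ℝ, ∀ t : Fin d → ℝ, ∀ ht : ∀ q ∈ 𝔻, MvPolynomial.eval t q ≠ 0,
          (∀ i : Fin k, 0 ≤ MvPolynomial.eval t (f i)) →
          ∀ j : Fin m, |evalLoc 𝔻 t ht (h j)| ≤ C) ∧
        (∀ lam : Fin m → ℝ,
          (∃ t : Fin d → ℝ, ∃ ht : ∀ q ∈ 𝔻, MvPolynomial.eval t q ≠ 0,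
            (∀ i : Fin k, 0 ≤ MvPolynomial.eval t (f i)) ∧
            ∀ j : Fin m, evalLoc 𝔻 t ht (h j) = lam j) →
          ∃ (ℰ : Submonoid (Polynomial ℝ)), (0 : Polynomial ℝ) ∉ ℰ ∧ ℰ.FG ∧
            ∃ (Cb : FinCommAlg)
              (ρ : TensorProduct ℝ (Localization ℰ) Cb.carrier →ₐ[ℝ]
                (Localization 𝔻 ⧸ Ideal.span (Set.range fun j : Fin m =>
                  h j - algebraMap ℝ (Localization 𝔻) (lam j)))),
              Function.Surjective ρ))
    (L₀ : Localization 𝔻₀ →ₗ[ℝ] ℝ)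
    (hL₀ : ∀ a : Localization 𝔻₀,
      IsInPreordering
        (Set.range fun i : Fin k =>
          algebraMap (MvPolynomial (Fin d) ℝ) (Localization 𝔻₀) (f i)) a → 0 ≤ L₀ a)
    (p q : MvPolynomial (Fin d) ℝ) (hq : q ∈ 𝔻₀)
    (hpos : ∀ t : Fin d → ℝ, eval t q ≠ 0 → 0 ≤ eval t p / eval t q) :
    0 ≤ L₀ (Localization.mk p ⟨q, hq⟩) := by
  set 𝔻 : Submonoid (MvPolynomial (Fin d) ℝ) := Submonoid.closure {q} with h𝔻
  have hle : 𝔻 ≤ 𝔻₀ := by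
    rw [h𝔻, Submonoid.closure_le]; simpa using hq
  have hFG : 𝔻.FG := ⟨{q}, by simp [h𝔻]⟩
  have hq' : q ∈ 𝔻 := Submonoid.subset_closure rfl
  clear_value 𝔻
  obtain ⟨m, h, ⟨C, hC⟩, hfib⟩ := hyp 𝔻 hle hFG
  have : Monoid.FG 𝔻 := (Monoid.fg_iff_submonoid_fg 𝔻).2 hFG
  have : Algebra.FiniteType (MvPolynomial (Fin d) ℝ) (Localization 𝔻) :=
    IsLocalization.finiteType_of_monoid_fg 𝔻 _
  have : Algebra.FiniteType ℝ (Localization 𝔻) :=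
    Algebra.FiniteType.trans (S := MvPolynomial (Fin d) ℝ) inferInstance inferInstance
  -- the canonical map
  have hun : ∀ y : 𝔻, IsUnit (algebraMap (MvPolynomial (Fin d) ℝ) (Localization 𝔻₀) y.1) :=
    fun y => IsLocalization.map_units (Localization 𝔻₀) (⟨y.1, hle y.2⟩ : 𝔻₀)
  let φ : Localization 𝔻 →ₐ[MvPolynomial (Fin d) ℝ] Localization 𝔻₀ :=
    IsLocalization.liftAlgHom (M := 𝔻) (f := Algebra.ofId (MvPolynomial (Fin d) ℝ) (Localization 𝔻₀)) hun
  let ψ : Localization 𝔻 →ₐ[ℝ] Localization 𝔻₀ := φ.restrictScalars ℝ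
  have hψ : ∀ r, ψ (algebraMap _ _ r) = algebraMap (MvPolynomial (Fin d) ℝ) (Localization 𝔻₀) r :=
    fun r => φ.commutes r
  clear_value ψ
  set S : Set (Localization 𝔻) := Set.range fun i : Fin k =>
          algebraMap (MvPolynomial (Fin d) ℝ) (Localization 𝔻) (f i) with hS
  have hSf : S.Finite := Set.finite_range _
  set a : Localization 𝔻 := Localization.mk p ⟨q, hq'⟩ with ha
  have ham : a * algebraMap _ _ q = algebraMap _ _ p := by
    rw [ha, Localization.mk_eq_mk']
    exact IsLocalization.mk'_spec (Localization 𝔻) p ⟨q, hq'⟩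
  have hψa : ψ a = Localization.mk p ⟨q, hq⟩ := by
    rw [Localization.mk_eq_mk', IsLocalization.eq_mk'_iff_mul_eq, ← hψ p, ← ham, map_mul, hψ]
  have hχa : ∀ χ : Localization 𝔻 →ₐ[ℝ] ℝ, 0 ≤ χ a := by
    intro χ
    obtain ⟨t, ht, h1, -⟩ := char_point 𝔻 χ
    have e := congrArg χ ham
    rw [map_mul, h1, h1] at e
    have := hpos t (ht q hq')
    rwa [← e, mul_div_cancel_right₀ _ (ht q hq')] at this
  have hSχ : ∀ (χ : Localization 𝔻 →ₐ[ℝ] ℝ) (t : Fin d → ℝ),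
      (∀ p : MvPolynomial (Fin d) ℝ, χ (algebraMap _ _ p) = MvPolynomial.eval t p) →
      ((∀ s ∈ S, 0 ≤ χ s) → ∀ i, 0 ≤ eval t (f i)) := by
    intro χ t h1 hs i
    rw [← h1]
    exact hs _ ⟨i, rfl⟩
  rw [← hψa]
  refine reduce S hSf (L₀ ∘ₗ ψ.toLinearMap) ?_ h C ?_ a ?_
  · intro t ht
    apply hL₀
    apply pre_isIn
    have : pre S ≤ (pre (Set.range fun i : Fin k =>
          algebraMap (MvPolynomial (Fin d) ℝ) (Localization 𝔻₀) (f i))).comap (ψ : Localization 𝔻 →+* Localization 𝔻₀) := by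
      unfold pre
      rw [Subsemiring.closure_le]
      rintro x (⟨i, rfl⟩ | ⟨y, rfl⟩)
      · refine Subsemiring.subset_closure (Or.inl ⟨i, ?_⟩)
        exact (hψ _).symm
      · refine Subsemiring.subset_closure (Or.inr ⟨ψ y, ?_⟩)
        simp
    exact this ht
  · intro χ hχ j
    obtain ⟨t, ht, h1, h2⟩ := char_point 𝔻 χ
    rw [h2]
    exact hC t ht (hSχ χ t h1 hχ) j
  · rintro lam ⟨χ, hχ, hlam⟩ N hN hI
    obtain ⟨t, ht, h1, h2⟩ := char_point 𝔻 χ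
    obtain ⟨ℰ, -, hE, Cb, ρ, hρ⟩ := hfib lam ⟨t, ht, hSχ χ t h1 hχ, fun j => by rw [← h2, hlam]⟩
    have := Cb.findim
    refine fibre _ ℰ hE ρ hρ N ?_ hI a hχa
    intro t ht
    refine hN t (Subsemiring.closure_mono ?_ ht)
    exact Set.union_subset_union_left _ (Set.empty_subset _)
end pos
end RMP

namespace RMP
set_option linter.unusedSectionVars false

section haviland
open MvPolynomial Filter Topology MeasureTheory
open scoped CompactlySupported

variable {d : ℕ}

lemma mk_lin (D : Submonoid (MvPolynomial (Fin d) ℝ)) (P p q : MvPolynomial (Fin d) ℝ) (hq : q ∈ D)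
    (c e : ℝ) :
    (Localization.mk (C c * P + C e * (p * q ^ 3)) ⟨q ^ 4, D.pow_mem hq 4⟩ : Localization D) =
      c • Localization.mk P ⟨q ^ 4, D.pow_mem hq 4⟩ + e • Localization.mk p ⟨q, hq⟩ := by
  rw [Localization.smul_mk, Localization.smul_mk, Localization.add_mk, Localization.mk_eq_mk_iff,
    Localization.r_iff_exists]
  refine ⟨1, ?_⟩
  simp only [MvPolynomial.smul_eq_C_mul, Submonoid.coe_mul, OneMemClass.coe_one]
  ring

/-- the extension step -/
lemma ext_step (D : Submonoid (MvPolynomial (Fin d) ℝ)) (L : Localization D →ₗ[ℝ] ℝ)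
    (hL : ∀ (p q : MvPolynomial (Fin d) ℝ) (hq : q ∈ D),
      (∀ t : Fin d → ℝ, eval t q ≠ 0 → 0 ≤ eval t p / eval t q) → 0 ≤ L (Localization.mk p ⟨q, hq⟩)) :
    ∃ Λ : C_c(Fin d → ℝ, ℝ) →ₗ[ℝ] ℝ, ∀ (p q : MvPolynomial (Fin d) ℝ) (hq : q ∈ D) (g : C_c(Fin d → ℝ, ℝ)),
      (∀ t : Fin d → ℝ, eval t q ≠ 0 → 0 ≤ eval t p / eval t q + g t) →
        0 ≤ L (Localization.mk p ⟨q, hq⟩) + Λ g := by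
  let s : PointedCone ℝ (Localization D × C_c(Fin d → ℝ, ℝ)) :=
    { carrier := {x | ∃ (p q : MvPolynomial (Fin d) ℝ) (hq : q ∈ D), x.1 = Localization.mk p ⟨q, hq⟩ ∧
        ∀ t : Fin d → ℝ, eval t q ≠ 0 → 0 ≤ eval t p / eval t q + x.2 t}
      add_mem' := by
        rintro x y ⟨p, q, hq, h1, h2⟩ ⟨p', q', hq', h1', h2'⟩
        refine ⟨q * p' + q' * p, q * q', D.mul_mem hq hq', ?_, ?_⟩
        · rw [Prod.fst_add, h1, h1', Localization.add_mk]
          rfl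
        · intro t ht
          rw [map_mul] at ht
          have hq1 := left_ne_zero_of_mul ht
          have hq2 := right_ne_zero_of_mul ht
          have a := h2 t hq1
          have b := h2' t hq2
          have e : eval t (q * p' + q' * p) / eval t (q * q') =
            eval t p / eval t q + eval t p' / eval t q' := by
            simp only [map_mul, map_add]
            field_simp
            ring
          rw [e]
          have : (x + y).2 t = x.2 t + y.2 t := rfl
          rw [this]
          linarith
      zero_mem' := by
        refine ⟨0, 1, D.one_mem, ?_, ?_⟩
        · rw [Localization.mk_zero]; rfl
        · intro t _
          simp
      smul_mem' := by
        rintro ⟨c, hc⟩ x ⟨p, q, hq, h1, h2⟩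
        refine ⟨C c * p, q, hq, ?_, ?_⟩
        · have : x.1 = Localization.mk p ⟨q, hq⟩ := h1
          change c • x.1 = _
          rw [h1, Localization.smul_mk, MvPolynomial.smul_eq_C_mul]
        · intro t ht
          have := mul_nonneg hc (h2 t ht)
          change 0 ≤ _ + c * x.2 t
          rw [map_mul, eval_C]
          calc 0 ≤ _ := this
            _ = _ := by ring }
  let F : (Localization D × C_c(Fin d → ℝ, ℝ)) →ₗ.[ℝ] ℝ :=
    { domain := (⊤ : Submodule ℝ (Localization D)).prod ⊥
      toFun := (L ∘ₗ LinearMap.fst ℝ _ _) ∘ₗ Submodule.subtype _ }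
  obtain ⟨G, hG1, hG2⟩ := riesz_extension s F (by
    rintro ⟨⟨a, g⟩, hx⟩ ⟨p, q, hq, h1, h2⟩
    have hg : g = 0 := by simpa using hx.2
    subst hg
    change 0 ≤ L a
    have h1' : a = Localization.mk p ⟨q, hq⟩ := h1
    rw [h1']
    refine hL p q hq fun t ht => ?_
    simpa using h2 t ht) (by
    rintro ⟨a, g⟩
    obtain ⟨M, hM⟩ := g.hasCompactSupport.exists_bound_of_continuous g.continuous
    refine ⟨⟨(-a + Localization.mk (C M) ⟨1, D.one_mem⟩, 0), by simp [F]⟩, C M, 1, D.one_mem, ?_, ?_⟩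
    · simp
    · intro t _
      have := hM t
      rw [Real.norm_eq_abs, abs_le] at this
      simp
      linarith)
  refine ⟨G ∘ₗ LinearMap.inr ℝ _ _, fun p q hq g h => ?_⟩
  have h1 := hG2 (Localization.mk p ⟨q, hq⟩, g) ⟨p, q, hq, rfl, h⟩
  have h2 := hG1 ⟨(Localization.mk p ⟨q, hq⟩, 0), by simp [F]⟩
  have h3 : ((Localization.mk p ⟨q, hq⟩, g) : Localization D × C_c(Fin d → ℝ, ℝ)) =
    (Localization.mk p ⟨q, hq⟩, 0) + (0, g) := by simp
  rw [h3, map_add] at h1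
  have h4 : G (Localization.mk p ⟨q, hq⟩, 0) = L (Localization.mk p ⟨q, hq⟩) := h2
  rw [h4] at h1
  exact h1

noncomputable def nsq (x : Fin d → ℝ) : ℝ := ∑ i, x i ^ 2

noncomputable def gfun (p q : MvPolynomial (Fin d) ℝ) (ε : ℝ) (hε : 0 < ε) : C_c(Fin d → ℝ, ℝ) where
  toFun x := max 0 (1 - ε * nsq x) * (eval x p * eval x q / (eval x q ^ 2 + ε))
  continuous_toFun := by
    have hp := MvPolynomial.continuous_eval p
    have hq := MvPolynomial.continuous_eval q
    have : Continuous (nsq : (Fin d → ℝ) → ℝ) := by unfold nsq; fun_prop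
    refine (by fun_prop : Continuous fun x : Fin d → ℝ => max 0 (1 - ε * nsq x)).mul ?_
    refine (hp.mul hq).div (by fun_prop) fun x => ?_
    positivity
  hasCompactSupport' := by
    refine HasCompactSupport.intro (isCompact_closedBall (0 : Fin d → ℝ) (1 + 1 / ε)) fun x hx => ?_
    have : 1 - ε * nsq x ≤ 0 := by
      by_contra! h
      apply hx
      rw [mem_closedBall_zero_iff, pi_norm_le_iff_of_nonneg (by positivity)]
      intro i
      have h1 : x i ^ 2 ≤ nsq x := Finset.single_le_sum (f := fun i => x i ^ 2) (fun _ _ => sq_nonneg _) (Finset.mem_univ i)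
      have h2 : nsq x ≤ 1 / ε := by
        rw [le_div_iff₀ hε]; nlinarith
      rw [Real.norm_eq_abs]
      nlinarith [sq_abs (x i), sq_nonneg (|x i| - 1)]
    simp [max_eq_left this]

lemma gfun_apply (p q : MvPolynomial (Fin d) ℝ) (ε : ℝ) (hε : 0 < ε) (x : Fin d → ℝ) :
    gfun p q ε hε x = max 0 (1 - ε * nsq x) * (eval x p * eval x q / (eval x q ^ 2 + ε)) := rfl

lemma nsq_nonneg (x : Fin d → ℝ) : 0 ≤ nsq x := Finset.sum_nonneg fun _ _ => sq_nonneg _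

lemma real_est (p q ε n : ℝ) (hε : 0 < ε) (hn : 0 ≤ n) (hq : q ≠ 0) :
    |p / q - max 0 (1 - ε * n) * (p * q / (q ^ 2 + ε))| ≤
      ε * ((n ^ 2 * q ^ 4 + 2 * p ^ 2 * q ^ 2 + 1) / q ^ 4) := by
  set c := max 0 (1 - ε * n) with hc
  have hc0 : 0 ≤ c := le_max_left _ _
  have hc1 : c ≤ 1 := max_le zero_le_one (by nlinarith)
  have hc2 : 1 - c ≤ ε * n := by have := le_max_right 0 (1 - ε * n); linarith
  set r := p / q with hr
  have hq2 : 0 < q ^ 2 := by positivity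
  have e1 : r - c * (p * q / (q ^ 2 + ε)) = r * ((1 - c) + c * (ε / (q ^ 2 + ε))) := by
    have : p = r * q := by rw [hr]; field_simp
    rw [this]; field_simp; ring
  have e2 : (n ^ 2 * q ^ 4 + 2 * p ^ 2 * q ^ 2 + 1) / q ^ 4 = n ^ 2 + 2 * r ^ 2 + (1 / q ^ 2) ^ 2 := by
    rw [hr]; field_simp
  rw [e1, e2, abs_mul]
  have h3 : ε / (q ^ 2 + ε) ≤ ε * (1 / q ^ 2) := by
    rw [mul_one_div]
    exact div_le_div_of_nonneg_left hε.le hq2 (by linarith)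
  have h4 : 0 ≤ ε / (q ^ 2 + ε) := by positivity
  generalize 1 / q ^ 2 = u at *
  generalize ε / (q ^ 2 + ε) = v at *
  have h5 : |1 - c + c * v| ≤ ε * (n + u) := by
    rw [abs_of_nonneg (by nlinarith [mul_nonneg hc0 h4])]
    nlinarith
  have hr0 := abs_nonneg r
  calc |r| * |1 - c + c * v| ≤ |r| * (ε * (n + u)) := by gcongr
    _ = ε * (|r| * (n + u)) := by ring
    _ ≤ _ := by
      gcongr
      nlinarith [sq_abs r, sq_nonneg (|r| - n), sq_nonneg (|r| - u), sq_nonneg n, sq_nonneg u]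

lemma gfun_abs_le (p q : MvPolynomial (Fin d) ℝ) (ε : ℝ) (hε : 0 < ε) (x : Fin d → ℝ) :
    |gfun p q ε hε x| ≤ |eval x p / eval x q| := by
  rw [gfun_apply]
  have hn := nsq_nonneg x
  generalize nsq x = n at *
  generalize eval x p = a
  generalize eval x q = b
  by_cases hb : b = 0
  · simp [hb]
  set c := max 0 (1 - ε * n) with hc
  have hc0 : 0 ≤ c := le_max_left _ _
  have hc1 : c ≤ 1 := max_le zero_le_one (by nlinarith)
  have e : a * b / (b ^ 2 + ε) = (b ^ 2 / (b ^ 2 + ε)) * (a / b) := by field_simp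
  rw [e, ← mul_assoc, abs_mul]
  refine mul_le_of_le_one_left (abs_nonneg _) ?_
  have h1 : b ^ 2 / (b ^ 2 + ε) ≤ 1 := by
    rw [div_le_one (by positivity)]; linarith
  have h2 : 0 ≤ b ^ 2 / (b ^ 2 + ε) := by positivity
  rw [abs_of_nonneg (mul_nonneg hc0 h2)]
  exact mul_le_one₀ hc1 h2 h1

noncomputable def gseq (p q : MvPolynomial (Fin d) ℝ) (n : ℕ) : C_c(Fin d → ℝ, ℝ) :=
  gfun p q (1 / ((n : ℝ) + 1)) Nat.one_div_pos_of_nat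

lemma gseq_nonneg (p q : MvPolynomial (Fin d) ℝ) (n : ℕ) (x : Fin d → ℝ) (h : 0 ≤ eval x p * eval x q) :
    0 ≤ gseq p q n x := by
  rw [gseq, gfun_apply]
  exact mul_nonneg (le_max_left _ _) (div_nonneg h (by positivity))

lemma gseq_tendsto (p q : MvPolynomial (Fin d) ℝ) (x : Fin d → ℝ) :
    Tendsto (fun n : ℕ => gseq p q n x) atTop
      (𝓝 (eval x p / eval x q)) := by
  by_cases hb : eval x q = 0
  · simp [gseq, gfun_apply, hb]
  have h0 := tendsto_one_div_add_atTop_nhds_zero_nat (𝕜 := ℝ)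
  rw [tendsto_iff_norm_sub_tendsto_zero]
  have h1 := h0.mul_const ((nsq x ^ 2 * eval x q ^ 4 + 2 * eval x p ^ 2 * eval x q ^ 2 + 1) / eval x q ^ 4)
  rw [zero_mul] at h1
  refine squeeze_zero (fun _ => norm_nonneg _) (fun n => ?_) h1
  rw [norm_sub_rev, Real.norm_eq_abs, gseq, gfun_apply]
  exact real_est _ _ _ _ Nat.one_div_pos_of_nat (nsq_nonneg x) hb

lemma conv_step (D : Submonoid (MvPolynomial (Fin d) ℝ)) (L : Localization D →ₗ[ℝ] ℝ)
    (Λ : C_c(Fin d → ℝ, ℝ) →ₗ[ℝ] ℝ)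
    (hΛ : ∀ (p q : MvPolynomial (Fin d) ℝ) (hq : q ∈ D) (g : C_c(Fin d → ℝ, ℝ)),
      (∀ t : Fin d → ℝ, eval t q ≠ 0 → 0 ≤ eval t p / eval t q + g t) →
        0 ≤ L (Localization.mk p ⟨q, hq⟩) + Λ g)
    (p q : MvPolynomial (Fin d) ℝ) (hq : q ∈ D) :
      Tendsto (fun n : ℕ => Λ (gseq p q n)) atTop (𝓝 (L (Localization.mk p ⟨q, hq⟩))) := by
  let P : MvPolynomial (Fin d) ℝ := (∑ i, X i ^ 2) ^ 2 * q ^ 4 + 2 * p ^ 2 * q ^ 2 + 1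
  have hP : ∀ x, eval x P = nsq x ^ 2 * eval x q ^ 4 + 2 * eval x p ^ 2 * eval x q ^ 2 + 1 := by
    intro x; simp [P, nsq]
  have key : ∀ (ε : ℝ) (hε : 0 < ε), |Λ (gfun p q ε hε) - L (Localization.mk p ⟨q, hq⟩)| ≤
      ε * L (Localization.mk P ⟨q ^ 4, D.pow_mem hq 4⟩) := by
    intro ε hε
    have est : ∀ x, eval x q ≠ 0 → |eval x p / eval x q - gfun p q ε hε x| ≤ ε * (eval x P / eval x q ^ 4) := by
      intro x hx
      rw [hP, gfun_apply]
      exact real_est _ _ _ _ hε (nsq_nonneg x) hx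
    have e : ∀ (e : ℝ) x, eval x q ≠ 0 → eval x (C ε * P + C e * (p * q ^ 3)) / eval x (q ^ 4) =
        ε * (eval x P / eval x q ^ 4) + e * (eval x p / eval x q) := by
      intro e x hx
      simp only [map_add, map_mul, map_pow, eval_C]
      field_simp
    have a1 := hΛ (C ε * P + C (-1) * (p * q ^ 3)) _ (D.pow_mem hq 4) (gfun p q ε hε) (by
      intro t ht
      have ht' : eval t q ≠ 0 := by intro h; simp [h] at ht
      rw [e _ _ ht']
      have := abs_le.1 (est t ht')
      linarith [this.2])
    have a2 := hΛ (C ε * P + C 1 * (p * q ^ 3)) _ (D.pow_mem hq 4) (-gfun p q ε hε) (by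
      intro t ht
      have ht' : eval t q ≠ 0 := by intro h; simp [h] at ht
      rw [e _ _ ht']
      have := abs_le.1 (est t ht')
      have h : (-gfun p q ε hε) t = - gfun p q ε hε t := rfl
      rw [h]
      linarith [this.1])
    rw [mk_lin D P p q hq, map_add, map_smul, map_smul, smul_eq_mul, smul_eq_mul] at a1 a2
    rw [map_neg] at a2
    rw [abs_le]
    constructor <;> linarith
  rw [tendsto_iff_norm_sub_tendsto_zero]
  have h0 := tendsto_one_div_add_atTop_nhds_zero_nat (𝕜 := ℝ)
  have h1 := h0.mul_const (L (Localization.mk P ⟨q ^ 4, D.pow_mem hq 4⟩))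
  rw [zero_mul] at h1
  refine squeeze_zero (fun _ => norm_nonneg _) (fun n => ?_) h1
  exact key _ _

lemma nn_step (μ : Measure (Fin d → ℝ)) (Λ : C_c(Fin d → ℝ, ℝ) → ℝ)
    (hintg : ∀ g : C_c(Fin d → ℝ, ℝ), ∫ x, g x ∂μ = Λ g)
    (hgi : ∀ g : C_c(Fin d → ℝ, ℝ), Integrable g μ) (p q : MvPolynomial (Fin d) ℝ) (ℓ : ℝ)
    (hconv : Tendsto (fun n : ℕ => Λ (gseq p q n)) atTop (𝓝 ℓ))
    (hpq : ∀ x, 0 ≤ eval x p * eval x q) :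
      Integrable (fun x => eval x p / eval x q) μ := by
  have hae : ∀ᵐ x ∂μ, Tendsto (fun n : ℕ => gseq p q n x) atTop
    (𝓝 (eval x p / eval x q)) := Eventually.of_forall fun x => gseq_tendsto p q x
  have hm := fun n : ℕ => (hgi (gseq p q n)).aestronglyMeasurable
  refine ⟨aestronglyMeasurable_of_tendsto_ae _ hm hae, ?_⟩
  have hfat : ∫⁻ x, ‖eval x p / eval x q‖ₑ ∂μ ≤
      liminf (fun n : ℕ => ∫⁻ x, ‖gseq p q n x‖ₑ ∂μ) atTop := by
    refine le_trans (le_of_eq ?_) (lintegral_liminf_le' (fun n ↦ (hm n).aemeasurable.enorm))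
    refine lintegral_congr fun x => ?_
    exact ((gseq_tendsto p q x).enorm.liminf_eq).symm
  refine lt_of_le_of_lt hfat ?_
  have : ∀ n : ℕ, ∫⁻ x, ‖gseq p q n x‖ₑ ∂μ =
      ENNReal.ofReal (Λ (gseq p q n)) := by
    intro n
    rw [← hintg, ofReal_integral_eq_lintegral_ofReal (hgi _)]
    · refine lintegral_congr fun x => ?_
      rw [Real.enorm_of_nonneg (gseq_nonneg p q n x (hpq x))]
    · refine Eventually.of_forall fun x => ?_
      exact gseq_nonneg p q n x (hpq x)
  simp_rw [this]
  rw [(ENNReal.tendsto_ofReal hconv).liminf_eq]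
  exact ENNReal.ofReal_lt_top

theorem haviland (D : Submonoid (MvPolynomial (Fin d) ℝ)) (L : Localization D →ₗ[ℝ] ℝ)
    (hL : ∀ (p q : MvPolynomial (Fin d) ℝ) (hq : q ∈ D),
      (∀ t : Fin d → ℝ, eval t q ≠ 0 → 0 ≤ eval t p / eval t q) → 0 ≤ L (Localization.mk p ⟨q, hq⟩)) :
    ∃ μ : MeasureTheory.Measure (Fin d → ℝ),
      ∀ (p : MvPolynomial (Fin d) ℝ) (q : MvPolynomial (Fin d) ℝ) (hq : q ∈ D),
        MeasureTheory.Integrable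
          (fun x : Fin d → ℝ => MvPolynomial.eval x p / MvPolynomial.eval x q) μ ∧
        L (Localization.mk p ⟨q, hq⟩) =
          ∫ x : Fin d → ℝ, MvPolynomial.eval x p / MvPolynomial.eval x q ∂μ := by
  obtain ⟨Λ, hΛ⟩ := ext_step D L hL
  let Λp : C_c(Fin d → ℝ, ℝ) →ₚ[ℝ] ℝ := PositiveLinearMap.mk₀ Λ (by
    intro g hg
    have := hΛ 0 1 D.one_mem g (fun t _ => by simpa using hg t)
    simpa [Localization.mk_zero] using this)
  set μ := RealRMK.rieszMeasure Λp with hμ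
  have hintg : ∀ g : C_c(Fin d → ℝ, ℝ), ∫ x, g x ∂μ = Λ g := fun g => RealRMK.integral_rieszMeasure Λp g
  have hgi : ∀ g : C_c(Fin d → ℝ, ℝ), Integrable g μ := fun g =>
    g.continuous.integrable_of_hasCompactSupport g.hasCompactSupport
  have hconv := conv_step D L Λ hΛ
  have hnn := fun (p q : MvPolynomial (Fin d) ℝ) (hq : q ∈ D) => nn_step μ Λ hintg hgi p q _ (hconv p q hq)
  refine ⟨μ, fun p q hq => ?_⟩
  have hI : Integrable (fun x => eval x p / eval x q) μ := by
    have i1 := hnn 1 1 D.one_mem (by simp)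
    have i2 := hnn (p ^ 2) (q ^ 2) (D.pow_mem hq 2) (fun x => by simp only [map_pow]; positivity)
    refine (i1.add i2).mono' ?_ (Eventually.of_forall fun x => ?_)
    · exact ((MvPolynomial.continuous_eval p).measurable.div
        (MvPolynomial.continuous_eval q).measurable).aestronglyMeasurable
    · simp only [Pi.add_apply, map_one, map_pow, Real.norm_eq_abs, ← div_pow]
      generalize eval x p / eval x q = r
      nlinarith [sq_abs r, sq_nonneg (|r| - 1)]
  refine ⟨hI, ?_⟩
  have hdc := tendsto_integral_of_dominated_convergence (μ := μ)
    (F := fun (n : ℕ) x => gseq p q n x)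
    (f := fun x => eval x p / eval x q)
    (fun x => |eval x p / eval x q|) (fun n => (hgi _).aestronglyMeasurable) hI.abs
    (fun n => Eventually.of_forall fun x => gfun_abs_le _ _ _ _ x)
    (Eventually.of_forall fun x => gseq_tendsto p q x)
  simp_rw [hintg] at hdc
  exact tendsto_nhds_unique (hconv p q hq) hdc
end haviland
end RMP

/-- **Theorem 3.2 (rational moment problem, general multiplicative sets).**
Let `𝔻₀` be a (not necessarily finitely generated) multiplicative set in
`ℝ[x₁,…,x_d]` and `f₁,…,f_k ∈ ℝ[x₁,…,x_d]`.  Suppose that every finitely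
generated multiplicative subset `𝔻 ⊆ 𝔻₀` admits elements `h₁,…,h_m` of
`A_𝔻 = 𝔻⁻¹ℝ[x₁,…,x_d]` satisfying the boundedness assumption (i) and the fibre
assumption (ii) of Theorem 3.1.  Then every linear functional `L₀` on
`A₀ = 𝔻₀⁻¹ℝ[x₁,…,x_d]` that is nonnegative on the preordering generated by
`f₁,…,f_k` is given by a positive Borel measure on `ℝ^d`. -/
theorem rational_moment_problem_general {d : ℕ}
    (𝔻₀ : Submonoid (MvPolynomial (Fin d) ℝ)) (h𝔻0 : (0 : MvPolynomial (Fin d) ℝ) ∉ 𝔻₀)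
    {k : ℕ} (f : Fin k → MvPolynomial (Fin d) ℝ)
    (hyp : ∀ 𝔻 : Submonoid (MvPolynomial (Fin d) ℝ), 𝔻 ≤ 𝔻₀ → 𝔻.FG →
      ∃ (m : ℕ) (h : Fin m → Localization 𝔻),
        (∃ C : ℝ, ∀ t : Fin d → ℝ, ∀ ht : ∀ q ∈ 𝔻, MvPolynomial.eval t q ≠ 0,
          (∀ i : Fin k, 0 ≤ MvPolynomial.eval t (f i)) →
          ∀ j : Fin m, |evalLoc 𝔻 t ht (h j)| ≤ C) ∧
        (∀ lam : Fin m → ℝ,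
          (∃ t : Fin d → ℝ, ∃ ht : ∀ q ∈ 𝔻, MvPolynomial.eval t q ≠ 0,
            (∀ i : Fin k, 0 ≤ MvPolynomial.eval t (f i)) ∧
            ∀ j : Fin m, evalLoc 𝔻 t ht (h j) = lam j) →
          ∃ (ℰ : Submonoid (Polynomial ℝ)), (0 : Polynomial ℝ) ∉ ℰ ∧ ℰ.FG ∧
            ∃ (Cb : FinCommAlg)
              (ρ : TensorProduct ℝ (Localization ℰ) Cb.carrier →ₐ[ℝ]
                (Localization 𝔻 ⧸ Ideal.span (Set.range fun j : Fin m =>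
                  h j - algebraMap ℝ (Localization 𝔻) (lam j)))),
              Function.Surjective ρ))
    (L₀ : Localization 𝔻₀ →ₗ[ℝ] ℝ)
    (hL₀ : ∀ a : Localization 𝔻₀,
      IsInPreordering
        (Set.range fun i : Fin k =>
          algebraMap (MvPolynomial (Fin d) ℝ) (Localization 𝔻₀) (f i)) a → 0 ≤ L₀ a) :
    ∃ μ : MeasureTheory.Measure (Fin d → ℝ),
      ∀ (p : MvPolynomial (Fin d) ℝ) (q : MvPolynomial (Fin d) ℝ) (hq : q ∈ 𝔻₀),
        MeasureTheory.Integrable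
          (fun x : Fin d → ℝ => MvPolynomial.eval x p / MvPolynomial.eval x q) μ ∧
        L₀ (Localization.mk p ⟨q, hq⟩) =
          ∫ x : Fin d → ℝ, MvPolynomial.eval x p / MvPolynomial.eval x q ∂μ := by
  exact RMP.haviland 𝔻₀ L₀ (RMP.positivity_main 𝔻₀ f hyp L₀ hL₀)
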